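/- arXiv:1206.1472 — 2 statements merged into one kernel-verified Lean document; each statement's English description precedes it below -/
import Mathlib

section
/- Assume (H1): the completely positive map L admits a unique invariant state ρ_∞. Fix l ∈ ℝ^d and set m = Σ_{i=1}^{2d} Tr(A_i ρ_∞ A_i^*) e_i. If L and L' are two k×k matrices both satisfying X - L^*(X) = Σ_{i=1}^{2d} (e_i·l) A_i^* A_i - (m·l) I, then L - L' is a complex multiple of the identity matrix. -/
open MeasureTheory Filter Matrix Finset
open scoped ComplexOrder

noncomputable section

/-- The direction vectors `e_1, …, e_{2d}` in `ℤ^d`, with `e_{d+j} = -e_j`. -/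
def dir (d : ℕ) (i : Fin (2 * d)) : Fin d → ℤ :=
  fun j => if (i : ℕ) < d then (if (j : ℕ) = (i : ℕ) then 1 else 0)
           else (if (j : ℕ) = (i : ℕ) - d then -1 else 0)

/-- The direction vectors viewed in `ℝ^d`. -/
def dirR (d : ℕ) (i : Fin (2 * d)) : Fin d → ℝ := fun j => (dir d i j : ℝ)

instance {k : ℕ} : MeasurableSpace (Matrix (Fin k) (Fin k) ℂ) := MeasurableSpace.pi

/-- A density matrix: positive semidefinite with trace one. -/
def IsDensity {k : ℕ} (ρ : Matrix (Fin k) (Fin k) ℂ) : Prop := ρ.PosSemidef ∧ ρ.trace = 1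

/-- The quantum trajectory process of the open quantum random walk. -/
structure IsQTraj {k d : ℕ} {Ω : Type} {mΩ : MeasurableSpace Ω}
    (A : Fin (2 * d) → Matrix (Fin k) (Fin k) ℂ)
    (μ : Measure Ω) (ℱ : Filtration ℕ mΩ)
    (ρ : ℕ → Ω → Matrix (Fin k) (Fin k) ℂ)
    (X : ℕ → Ω → Fin d → ℤ) : Prop where
  density : ∀ n, ∀ᵐ ω ∂μ, IsDensity (ρ n ω)
  adapted_ρ : ∀ n, Measurable[ℱ n] (ρ n)
  adapted_X : ∀ n, Measurable[ℱ n] (X n)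
  prob : ∀ (n : ℕ) (j : Fin (2 * d)),
    μ[(fun ω => if X (n + 1) ω = X n ω + dir d j then (1 : ℝ) else 0) | ℱ n]
      =ᵐ[μ] fun ω => ((A j * ρ n ω * (A j)ᴴ).trace).re
  update : ∀ (n : ℕ) (j : Fin (2 * d)), ∀ᵐ ω ∂μ,
    X (n + 1) ω = X n ω + dir d j →
      ρ (n + 1) ω = ((A j * ρ n ω * (A j)ᴴ).trace)⁻¹ • (A j * ρ n ω * (A j)ᴴ)

/-- The drift vector `m = Σ_{i=1}^{2d} Tr(A_i ρ_∞ A_i^*) e_i ∈ ℝ^d`. -/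
def mvec {k d : ℕ} (A : Fin (2 * d) → Matrix (Fin k) (Fin k) ℂ)
    (ρinf : Matrix (Fin k) (Fin k) ℂ) : Fin d → ℝ :=
  fun j => ∑ i, ((A i * ρinf * (A i)ᴴ).trace).re * dirR d i j

theorem aux_proj {k : ℕ} (σ : Matrix (Fin k) (Fin k) ℂ) (hσ : σ.IsHermitian) :
    ∃ P : Matrix (Fin k) (Fin k) ℂ, Pᴴ = P ∧ P * P = P ∧ (P * σ).PosSemidef ∧
      (P * σ - σ).PosSemidef := by
  obtain ⟨U, hU1, D, hD⟩ : ∃ U : Matrix (Fin k) (Fin k) ℂ, Uᴴ * U = 1 ∧ ∃ D : Fin k → ℝ,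
      σ = U * diagonal (fun i => (D i : ℂ)) * Uᴴ := by
    refine ⟨hσ.eigenvectorUnitary, ?_, hσ.eigenvalues, ?_⟩
    · exact Unitary.coe_star_mul_self hσ.eigenvectorUnitary
    · exact hσ.spectral_theorem
  have key : ∀ X Y : Matrix (Fin k) (Fin k) ℂ, U * X * Uᴴ * (U * Y * Uᴴ) = U * (X * Y) * Uᴴ := by
    intro X Y
    calc _ = U * X * (Uᴴ * U) * Y * Uᴴ := by simp only [Matrix.mul_assoc]
      _ = _ := by rw [hU1]; simp only [Matrix.mul_assoc, Matrix.mul_one]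
  refine ⟨U * diagonal (fun i => if 0 < D i then (1:ℂ) else 0) * Uᴴ, ?_, ?_, ?_, ?_⟩
  · rw [conjTranspose_mul, conjTranspose_mul, conjTranspose_conjTranspose,
      diagonal_conjTranspose, Matrix.mul_assoc]
    congr 3
    ext i
    by_cases h : 0 < D i <;> simp [h]
  · rw [key, diagonal_mul_diagonal]
    congr 3
    ext i
    by_cases h : 0 < D i <;> simp [h]
  · rw [hD, key, diagonal_mul_diagonal]
    apply PosSemidef.mul_mul_conjTranspose_same
    apply PosSemidef.diagonal
    intro i
    by_cases h : 0 < D i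
    · simp [h, h.le]
    · simp [h]
  · rw [hD, key, diagonal_mul_diagonal, ← Matrix.sub_mul, ← Matrix.mul_sub, diagonal_sub]
    apply PosSemidef.mul_mul_conjTranspose_same
    apply PosSemidef.diagonal
    intro i
    by_cases h : 0 < D i
    · simp [h]
    · have h' : D i ≤ 0 := not_lt.mp h
      have h2 : (D i : ℂ) ≤ 0 := by exact_mod_cast h'
      simp only [h, if_false, zero_mul, zero_sub, Pi.zero_apply]
      exact neg_nonneg.mpr h2

open scoped MatrixOrder Matrix.Norms.L2Operator in
theorem aux_zero {k : ℕ} (W P : Matrix (Fin k) (Fin k) ℂ) (hW : W.PosSemidef)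
    (h : Pᴴ * W * P = 0) : W * P = 0 := by
  obtain ⟨B, rfl⟩ : ∃ B : Matrix (Fin k) (Fin k) ℂ, W = Bᴴ * B :=
    CStarAlgebra.nonneg_iff_eq_star_mul_self.mp hW.nonneg
  have : (B * P)ᴴ * (B * P) = 0 := by
    rw [← h]; simp only [conjTranspose_mul, Matrix.mul_assoc]
  rw [conjTranspose_mul_self_eq_zero] at this
  rw [Matrix.mul_assoc, this, Matrix.mul_zero]

/-- the map `L` as a linear map -/
def Lmap {k n : ℕ} (A : Fin n → Matrix (Fin k) (Fin k) ℂ) :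
    Matrix (Fin k) (Fin k) ℂ →ₗ[ℂ] Matrix (Fin k) (Fin k) ℂ where
  toFun σ := ∑ j, A j * σ * (A j)ᴴ
  map_add' x y := by simp [Matrix.mul_add, Matrix.add_mul, Finset.sum_add_distrib]
  map_smul' c x := by simp [Finset.smul_sum]

theorem Lmap_apply {k n : ℕ} (A : Fin n → Matrix (Fin k) (Fin k) ℂ) (σ) :
    Lmap A σ = ∑ j, A j * σ * (A j)ᴴ := rfl

theorem Lmap_pair {k n : ℕ} (A : Fin n → Matrix (Fin k) (Fin k) ℂ) (σ Y) :
    (Y * Lmap A σ).trace = ((∑ j, (A j)ᴴ * Y * A j) * σ).trace := by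
  rw [Lmap_apply, Matrix.mul_sum, Matrix.sum_mul, trace_sum, trace_sum]
  refine Finset.sum_congr rfl fun j _ => ?_
  rw [← Matrix.mul_assoc, trace_mul_comm]
  simp only [Matrix.mul_assoc]

theorem Lmap_trace {k n : ℕ} (A : Fin n → Matrix (Fin k) (Fin k) ℂ)
    (hA : ∑ j, (A j)ᴴ * A j = 1) (σ) : (Lmap A σ).trace = σ.trace := by
  have := Lmap_pair A σ 1
  simpa [hA] using this

theorem Lmap_pos {k n : ℕ} (A : Fin n → Matrix (Fin k) (Fin k) ℂ) (σ)
    (h : σ.PosSemidef) : (Lmap A σ).PosSemidef := by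
  rw [Lmap_apply]
  exact posSemidef_sum _ fun j _ => h.mul_mul_conjTranspose_same _

theorem aux_fix {k n : ℕ} (A : Fin n → Matrix (Fin k) (Fin k) ℂ)
    (hA : ∑ j, (A j)ᴴ * A j = 1) (σ : Matrix (Fin k) (Fin k) ℂ) (hσ : σ.IsHermitian)
    (hf : Lmap A σ = σ) : ∃ S N : Matrix (Fin k) (Fin k) ℂ, S.PosSemidef ∧ N.PosSemidef ∧
      Lmap A S = S ∧ Lmap A N = N ∧ σ = S - N := by
  obtain ⟨P, hP1, hP2, hS, hN⟩ := aux_proj σ hσ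
  have hT := Lmap_pos A _ hS
  have hW := Lmap_pos A _ hN
  have htr := Lmap_trace A hA (P * σ)
  have hTW : Lmap A (P * σ) - Lmap A (P * σ - σ) = σ := by
    rw [← map_sub, sub_sub_cancel, hf]
  generalize hTe : Lmap A (P * σ) = T at *
  generalize hWe : Lmap A (P * σ - σ) = W at *
  have h1 := hT.conjTranspose_mul_mul_same (1 - P)
  have h2 := hW.conjTranspose_mul_mul_same P
  have hQ : (1 - P)ᴴ = 1 - P := by simp [hP1]
  have hQ2 : (1 - P) * (1 - P) = 1 - P := by
    simp [Matrix.mul_sub, Matrix.sub_mul, hP2]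
  have e1 : ((1 - P)ᴴ * T * (1 - P)).trace = T.trace - (P * T).trace := by
    rw [hQ, trace_mul_comm, ← Matrix.mul_assoc, hQ2, Matrix.sub_mul, Matrix.one_mul, trace_sub]
  have e2 : (Pᴴ * W * P).trace = (P * W).trace := by
    rw [hP1, trace_mul_comm, ← Matrix.mul_assoc, hP2]
  have e3 : (P * T).trace - (P * W).trace = (P * σ).trace := by
    rw [← trace_sub, ← Matrix.mul_sub, hTW]
  have n1 := h1.trace_nonneg
  have n2 := h2.trace_nonneg
  have e4 : ((1 - P)ᴴ * T * (1 - P)).trace + (Pᴴ * W * P).trace = 0 := by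
    rw [e1, e2, htr, ← e3]; ring
  obtain ⟨z1, z2⟩ := (add_eq_zero_iff_of_nonneg n1 n2).mp e4
  have y1 := aux_zero _ _ hT (h1.trace_eq_zero_iff.mp z1)
  have y2 := aux_zero _ _ hW (h2.trace_eq_zero_iff.mp z2)
  have y3 : P * W = 0 := by
    have := congrArg conjTranspose y2
    simpa [hP1, hW.isHermitian.eq] using this
  have y4 : P * T = T := by
    have := congrArg conjTranspose y1
    rw [conjTranspose_mul, hQ, hT.isHermitian.eq, conjTranspose_zero, Matrix.sub_mul,
      Matrix.one_mul, sub_eq_zero] at this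
    exact this.symm
  have y5 : T = P * σ := by
    rw [← hTW, Matrix.mul_sub, y3, y4, sub_zero]
  refine ⟨P * σ, P * σ - σ, hS, hN, ?_, ?_, ?_⟩
  · rw [hTe, y5]
  · rw [hWe, ← y5, ← hTW]; abel
  · abel

theorem aux_span {k n : ℕ} (A : Fin n → Matrix (Fin k) (Fin k) ℂ)
    (hA : ∑ j, (A j)ᴴ * A j = 1) (ρinf : Matrix (Fin k) (Fin k) ℂ)
    (huniq : ∀ σ, IsDensity σ → (∑ j, A j * σ * (A j)ᴴ) = σ → σ = ρinf)
    (σ : Matrix (Fin k) (Fin k) ℂ) (hf : Lmap A σ = σ) : ∃ c : ℂ, c • ρinf = σ := by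
  have hpos : ∀ S : Matrix (Fin k) (Fin k) ℂ, S.PosSemidef → Lmap A S = S →
      ∃ c : ℂ, c • ρinf = S := by
    intro S hS hfS
    by_cases h0 : S.trace = 0
    · exact ⟨0, by rw [hS.trace_eq_zero_iff.mp h0, zero_smul]⟩
    · refine ⟨S.trace, ?_⟩
      have := huniq (S.trace⁻¹ • S) ⟨hS.smul (inv_nonneg.mpr hS.trace_nonneg), by simp [h0]⟩
        (by rw [← Lmap_apply, map_smul, hfS])
      rw [← this, smul_smul, mul_inv_cancel₀ h0, one_smul]
  have hher : ∀ S : Matrix (Fin k) (Fin k) ℂ, S.IsHermitian → Lmap A S = S →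
      ∃ c : ℂ, c • ρinf = S := by
    intro S hS hfS
    obtain ⟨S1, N1, a, b, c, d, rfl⟩ := aux_fix A hA S hS hfS
    obtain ⟨c1, rfl⟩ := hpos _ a c
    obtain ⟨c2, rfl⟩ := hpos _ b d
    exact ⟨c1 - c2, sub_smul _ _ _⟩
  have hstar : Lmap A σᴴ = σᴴ := by
    conv_rhs => rw [← hf]
    simp [Lmap_apply, conjTranspose_sum, Matrix.mul_assoc]
  obtain ⟨c1, h1⟩ := hher (σ + σᴴ) (by simp [IsHermitian, add_comm])
    (by rw [map_add, hf, hstar])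
  obtain ⟨c2, h2⟩ := hher (Complex.I • (σ - σᴴ)) (by
      simp [IsHermitian, ← smul_neg])
    (by rw [map_smul, map_sub, hf, hstar])
  refine ⟨(c1 - Complex.I * c2) / 2, ?_⟩
  have : (c1 - Complex.I * c2) • ρinf = (2:ℂ) • σ := by
    rw [sub_smul, mul_smul, h1, h2, smul_smul, Complex.I_mul_I, two_smul]
    module
  rw [div_eq_inv_mul, mul_smul, this, smul_smul]
  norm_num


/-- Under (H1), any two solutions of the equation
`X - L^*(X) = Σ_i (e_i·l) A_i^* A_i - (m·l) I` differ by a complex multiple of the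
identity. -/
theorem stmt5 {k d : ℕ} (hd : 1 ≤ d)
    (A : Fin (2 * d) → Matrix (Fin k) (Fin k) ℂ)
    (hA : ∑ j, (A j)ᴴ * A j = 1)
    (ρinf : Matrix (Fin k) (Fin k) ℂ) (hρinf : IsDensity ρinf)
    (hinv : (∑ j, A j * ρinf * (A j)ᴴ) = ρinf)
    (huniq : ∀ σ, IsDensity σ → (∑ j, A j * σ * (A j)ᴴ) = σ → σ = ρinf)
    (l : Fin d → ℝ) (L₁ L₂ : Matrix (Fin k) (Fin k) ℂ)
    (hL₁ : L₁ - (∑ i, (A i)ᴴ * L₁ * A i) =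
      (∑ i, (∑ j, dirR d i j * l j) • ((A i)ᴴ * A i)) -
        (∑ j, mvec A ρinf j * l j) • (1 : Matrix (Fin k) (Fin k) ℂ))
    (hL₂ : L₂ - (∑ i, (A i)ᴴ * L₂ * A i) =
      (∑ i, (∑ j, dirR d i j * l j) • ((A i)ᴴ * A i)) -
        (∑ j, mvec A ρinf j * l j) • (1 : Matrix (Fin k) (Fin k) ℂ)) :
    ∃ c : ℂ, L₁ - L₂ = c • (1 : Matrix (Fin k) (Fin k) ℂ) := by
  set Y := L₁ - L₂ with hY
  have hfix : ∑ i, (A i)ᴴ * Y * A i = Y := by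
    have := hL₁.trans hL₂.symm
    simp only [hY, Matrix.mul_sub, Matrix.sub_mul, Finset.sum_sub_distrib]
    rw [sub_eq_sub_iff_add_eq_add] at this
    rw [sub_eq_sub_iff_add_eq_add, add_comm _ L₂, this]
  let f := Lmap A - LinearMap.id
  let t := Matrix.traceLinearMap (Fin k) ℂ ℂ
  have hle : LinearMap.range f ≤ LinearMap.ker t := by
    rintro _ ⟨x, rfl⟩
    have := Lmap_trace A hA x
    simp [f, t, this]
  have hker : Module.finrank ℂ (LinearMap.ker f) ≤ 1 := by
    have : LinearMap.ker f ≤ Submodule.span ℂ {ρinf} := by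
      intro σ hσ
      rw [Submodule.mem_span_singleton]
      apply aux_span A hA ρinf huniq
      simpa [f, sub_eq_zero] using hσ
    exact (Submodule.finrank_mono this).trans (by simpa using finrank_span_le_card (R := ℂ) ({ρinf} : Set (Matrix (Fin k) (Fin k) ℂ)))
  have hrt : 1 ≤ Module.finrank ℂ (LinearMap.range t) := by
    rw [Nat.one_le_iff_ne_zero, Ne, Submodule.finrank_eq_zero, LinearMap.range_eq_bot]
    intro h
    have := congrArg (fun g => g ρinf) h
    simp [t, hρinf.2] at this
  have h1 := LinearMap.finrank_range_add_finrank_ker f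
  have h2 := LinearMap.finrank_range_add_finrank_ker t
  have heq : LinearMap.range f = LinearMap.ker t :=
    Submodule.eq_of_le_of_finrank_le hle (by omega)
  have hvan : ∀ X : Matrix (Fin k) (Fin k) ℂ, X.trace = 0 → (Y * X).trace = 0 := by
    intro X hX
    have : X ∈ LinearMap.range f := by rw [heq]; simpa [t] using hX
    obtain ⟨x, rfl⟩ := this
    have h3 := Lmap_pair A x Y
    rw [hfix] at h3
    simp [f, Matrix.mul_sub, h3]
  refine ⟨(Y * ρinf).trace, ?_⟩
  rw [Matrix.ext_iff_trace_mul_right]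
  intro X
  have := hvan (X - X.trace • ρinf) (by simp [hρinf.2])
  rw [Matrix.mul_sub, trace_sub, sub_eq_zero] at this
  rw [this]
  simp [mul_comm]
end
end

section
/- (Central Limit Theorem for open quantum random walks.) Assume (H1): L admits a unique invariant state ρ_∞. Set m = Σ_{i=1}^{2d} Tr(A_i ρ_∞ A_i^*) e_i ∈ ℝ^d with coordinates m_1,…,m_d, and for i = 1,…,d let L_i be a solution of L_i - L^*(L_i) = Σ_{j=1}^{2d} (e_j·e_i) A_j^* A_j - m_i I. Let (ρ_n, X_n)_{n≥0} be the quantum trajectory process of the open quantum random walk. Then (X_n - n m)/√n converges in distribution to the centered Gaussian distribution N(0, C) on ℝ^d, where the covariance matrix C is given for i, j ∈ {1,…,d} by C_{ij} = δ_{ij}( Tr(A_i ρ_∞ A_i^*) + Tr(A_{i+d} ρ_∞ A_{i+d}^*) ) − m_i m_j + ( Tr(A_i ρ_∞ A_i^* L_j) + Tr(A_j ρ_∞ A_j^* L_i) − Tr(A_{i+d} ρ_∞ A_{i+d}^* L_j) − Tr(A_{j+d} ρ_∞ A_{j+d}^* L_i) ) − ( m_i Tr(ρ_∞ L_j) + m_j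 Tr(ρ_∞ L_i) ), and this matrix C is symmetric positive semidefinite (so that N(0,C) is well defined). -/
open MeasureTheory Filter Matrix Finset
open scoped ComplexOrder

noncomputable section

/-- The index `i ∈ {1,…,d}` viewed inside `Fin (2d)` (direction `+e_i`). -/
def lo {d : ℕ} (i : Fin d) : Fin (2 * d) := ⟨i, by have := i.isLt; omega⟩

/-- The index `i + d` viewed inside `Fin (2d)` (direction `-e_i`). -/
def hi {d : ℕ} (i : Fin d) : Fin (2 * d) := ⟨(i : ℕ) + d, by have := i.isLt; omega⟩

/-- The covariance matrix `C` of the Central Limit Theorem. -/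
def Cmat {k d : ℕ} (A : Fin (2 * d) → Matrix (Fin k) (Fin k) ℂ)
    (ρinf : Matrix (Fin k) (Fin k) ℂ) (LL : Fin d → Matrix (Fin k) (Fin k) ℂ)
    (i j : Fin d) : ℝ :=
  (if i = j then ((A (lo i) * ρinf * (A (lo i))ᴴ).trace).re
      + ((A (hi i) * ρinf * (A (hi i))ᴴ).trace).re else 0)
    - mvec A ρinf i * mvec A ρinf j
    + (((A (lo i) * ρinf * (A (lo i))ᴴ * LL j).trace).re
      + ((A (lo j) * ρinf * (A (lo j))ᴴ * LL i).trace).re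
      - ((A (hi i) * ρinf * (A (hi i))ᴴ * LL j).trace).re
      - ((A (hi j) * ρinf * (A (hi j))ᴴ * LL i).trace).re)
    - (mvec A ρinf i * ((ρinf * LL j).trace).re
      + mvec A ρinf j * ((ρinf * LL i).trace).re)

lemma psd_factor {k : ℕ} {ρ : Matrix (Fin k) (Fin k) ℂ} (h : ρ.PosSemidef) :
    ∃ B : Matrix (Fin k) (Fin k) ℂ, ρ = Bᴴ * B := by
  open scoped MatrixOrder in
  open scoped Matrix.Norms.L2Operator in
  exact CStarAlgebra.nonneg_iff_eq_star_mul_self.1 h.nonneg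

lemma dens_entry {k : ℕ} {ρ : Matrix (Fin k) (Fin k) ℂ} (h : IsDensity ρ) (i j : Fin k) :
    ‖ρ i j‖ ≤ 1 := by
  obtain ⟨B, hB⟩ := psd_factor h.1
  have htr : ∀ i, ∑ l, ‖B l i‖ ^ 2 ≤ 1 := by
    intro i
    have h1 : ((∑ a, ∑ l, ‖B l a‖ ^ 2 : ℝ) : ℂ) = 1 := by
      rw [← h.2, hB]
      simp [Matrix.trace, Matrix.mul_apply, Complex.conj_mul']
    have h2 : (∑ a, ∑ l, ‖B l a‖ ^ 2 : ℝ) = 1 := by exact_mod_cast h1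
    rw [← h2]
    exact Finset.single_le_sum (f := fun a => ∑ l, ‖B l a‖ ^ 2)
      (fun a _ => by positivity) (Finset.mem_univ i)
  rw [hB, Matrix.mul_apply]
  calc ‖∑ l, Bᴴ i l * B l j‖ ≤ ∑ l, ‖Bᴴ i l * B l j‖ := norm_sum_le _ _
    _ ≤ ∑ l, (‖B l i‖ ^ 2 / 2 + ‖B l j‖ ^ 2 / 2) := by
        refine Finset.sum_le_sum fun l _ => ?_
        rw [norm_mul, Matrix.conjTranspose_apply, norm_star]
        nlinarith [sq_nonneg (‖B l i‖ - ‖B l j‖)]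
    _ ≤ 1 := by
        rw [Finset.sum_add_distrib, ← Finset.sum_div, ← Finset.sum_div]
        linarith [htr i, htr j]

/-- entrywise l1 size -/
def nsum {k : ℕ} (X : Matrix (Fin k) (Fin k) ℂ) : ℝ := ∑ i, ∑ j, ‖X i j‖

lemma dens_trace_le {k : ℕ} {ρ : Matrix (Fin k) (Fin k) ℂ} (h : IsDensity ρ)
    (X : Matrix (Fin k) (Fin k) ℂ) : ‖(ρ * X).trace‖ ≤ nsum X := by
  unfold nsum
  rw [Finset.sum_comm]
  simp only [Matrix.trace, Matrix.diag, Matrix.mul_apply]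
  refine (norm_sum_le _ _).trans (Finset.sum_le_sum fun i _ => ?_)
  refine (norm_sum_le _ _).trans (Finset.sum_le_sum fun j _ => ?_)
  rw [norm_mul]
  exact mul_le_of_le_one_left (norm_nonneg _) (dens_entry h i j)

lemma isClosed_dens {k : ℕ} : IsClosed {ρ : Matrix (Fin k) (Fin k) ℂ | IsDensity ρ} := by
  have : {ρ : Matrix (Fin k) (Fin k) ℂ | IsDensity ρ} =
      {ρ | ρᴴ = ρ} ∩ (⋂ x : Fin k → ℂ, {ρ | 0 ≤ star x ⬝ᵥ ρ *ᵥ x}) ∩ {ρ | ρ.trace = 1} := by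
    ext ρ
    simp only [IsDensity, Matrix.posSemidef_iff_dotProduct_mulVec, Set.mem_inter_iff, Set.mem_iInter,
      Set.mem_ofPred_eq, Matrix.IsHermitian]
  rw [this]
  refine IsClosed.inter (IsClosed.inter ?_ ?_) ?_
  · exact isClosed_eq (by fun_prop) (by fun_prop)
  · exact isClosed_iInter fun x => isClosed_le (by fun_prop) (by fun_prop)
  · exact isClosed_eq (by fun_prop) (by fun_prop)

lemma isCompact_dens {k : ℕ} : IsCompact {ρ : Matrix (Fin k) (Fin k) ℂ | IsDensity ρ} := by
  have hK : IsCompact (Set.pi Set.univ (fun _ : Fin k => Set.pi Set.univ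
      (fun _ : Fin k => Metric.closedBall (0 : ℂ) 1))) :=
    isCompact_univ_pi fun _ => isCompact_univ_pi fun _ => isCompact_closedBall _ _
  refine IsCompact.of_isClosed_subset (X := Matrix (Fin k) (Fin k) ℂ) hK isClosed_dens ?_
  intro ρ hρ i _ j _
  simpa using dens_entry hρ i j

section chan
variable {k : ℕ} {ι : Type} [Fintype ι] (A : ι → Matrix (Fin k) (Fin k) ℂ)

/-- The channel. -/
def chan : Matrix (Fin k) (Fin k) ℂ →ₗ[ℂ] Matrix (Fin k) (Fin k) ℂ where
  toFun σ := ∑ j, A j * σ * (A j)ᴴ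
  map_add' := by intros; simp [mul_add, add_mul, Finset.sum_add_distrib]
  map_smul' := by intros; simp [Finset.smul_sum]

/-- weighted dual of the channel. -/
def dch (w : ι → ℂ) : Matrix (Fin k) (Fin k) ℂ →ₗ[ℂ] Matrix (Fin k) (Fin k) ℂ where
  toFun X := ∑ j, w j • ((A j)ᴴ * X * A j)
  map_add' := by intros; simp [mul_add, add_mul, Finset.sum_add_distrib]
  map_smul' := by
    intro c X
    simp only [Matrix.mul_smul, Matrix.smul_mul, RingHom.id_apply, Finset.smul_sum]
    exact Finset.sum_congr rfl fun j _ => smul_comm _ _ _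

lemma trace_dch (w : ι → ℂ) (σ X : Matrix (Fin k) (Fin k) ℂ) :
    (σ * dch A w X).trace = ∑ j, w j * (A j * σ * (A j)ᴴ * X).trace := by
  simp only [dch, LinearMap.coe_mk, AddHom.coe_mk, Finset.mul_sum, Matrix.trace_sum,
    Matrix.mul_smul, Matrix.trace_smul, smul_eq_mul]
  refine Finset.sum_congr rfl fun j _ => ?_
  congr 1
  rw [Matrix.mul_assoc (A j * σ), Matrix.mul_assoc (A j), Matrix.trace_mul_comm (A j)]
  simp only [Matrix.mul_assoc]

lemma trace_chan (σ X : Matrix (Fin k) (Fin k) ℂ) :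
    (chan A σ * X).trace = (σ * dch A (fun _ => 1) X).trace := by
  rw [trace_dch]
  simp [chan, Finset.sum_mul, Matrix.trace_sum]

variable {A} 
lemma dch_one (hA : ∑ j, (A j)ᴴ * A j = 1) : dch A (fun _ => 1) 1 = 1 := by
  simp [dch, hA]

lemma trace_chan' (hA : ∑ j, (A j)ᴴ * A j = 1) (σ : Matrix (Fin k) (Fin k) ℂ) :
    (chan A σ).trace = σ.trace := by
  have := trace_chan A σ 1
  rwa [dch_one hA, Matrix.mul_one, Matrix.mul_one] at this

lemma dens_chan (hA : ∑ j, (A j)ᴴ * A j = 1) {σ : Matrix (Fin k) (Fin k) ℂ} (h : IsDensity σ) :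
    IsDensity (chan A σ) := by
  refine ⟨?_, by rw [trace_chan' hA, h.2]⟩
  exact Matrix.posSemidef_sum _ fun j _ => h.1.mul_mul_conjTranspose_same _

lemma dens_chan_pow (hA : ∑ j, (A j)ᴴ * A j = 1) {σ : Matrix (Fin k) (Fin k) ℂ} (h : IsDensity σ)
    (n : ℕ) : IsDensity ((chan A ^ n) σ) := by
  induction n with
  | zero => simpa using h
  | succ n ih => rw [pow_succ']; exact dens_chan hA ih

/-- Cesàro means. -/
def ces (A : ι → Matrix (Fin k) (Fin k) ℂ) (N : ℕ) (σ : Matrix (Fin k) (Fin k) ℂ) :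
    Matrix (Fin k) (Fin k) ℂ := ((N + 1 : ℕ) : ℂ)⁻¹ • ∑ n ∈ Finset.range (N + 1), (chan A ^ n) σ

lemma ces_dens (hA : ∑ j, (A j)ᴴ * A j = 1) {σ : Matrix (Fin k) (Fin k) ℂ} (h : IsDensity σ)
    (N : ℕ) : IsDensity (ces A N σ) := by
  refine ⟨?_, ?_⟩
  · refine Matrix.PosSemidef.smul (Matrix.posSemidef_sum _ fun n _ => (dens_chan_pow hA h n).1) ?_
    rw [inv_nonneg]; exact Nat.cast_nonneg _
  · simp only [ces, Matrix.trace_smul, Matrix.trace_sum, (dens_chan_pow hA h _).2]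
    simp
    field_simp

lemma ces_diff (σ : Matrix (Fin k) (Fin k) ℂ) (N : ℕ) :
    chan A (ces A N σ) - ces A N σ = ((N + 1 : ℕ) : ℂ)⁻¹ • ((chan A ^ (N + 1)) σ - σ) := by
  simp only [ces, map_smul, map_sum, ← smul_sub, ← Finset.sum_sub_distrib]
  congr 1
  have := Finset.sum_range_sub (fun n => (chan A ^ n) σ) (N + 1)
  rw [pow_zero, Module.End.one_apply] at this
  rw [← this]
  refine Finset.sum_congr rfl fun n _ => ?_
  simp [pow_succ']

lemma ces_tendsto (hA : ∑ j, (A j)ᴴ * A j = 1) {ρinf : Matrix (Fin k) (Fin k) ℂ}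
    (huniq : ∀ σ, IsDensity σ → chan A σ = σ → σ = ρinf)
    {σ : Matrix (Fin k) (Fin k) ℂ} (h : IsDensity σ) :
    Tendsto (fun N => ces A N σ) atTop (nhds ρinf) := by
  refine isCompact_dens.tendsto_nhds_of_unique_mapClusterPt
    (Eventually.of_forall (ces_dens hA h)) ?_
  intro τ hτ hcl
  refine huniq τ hτ ?_
  have : FirstCountableTopology (Matrix (Fin k) (Fin k) ℂ) :=
    inferInstanceAs (FirstCountableTopology (Fin k → Fin k → ℂ))
  obtain ⟨φ, hφ, hlim⟩ := MapClusterPt.tendsto_subseq hcl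
  have hc : Continuous (fun X => chan A X - X) := by
    have : Continuous (chan A) := LinearMap.continuous_of_finiteDimensional _
    fun_prop
  have h1 := (hc.tendsto τ).comp hlim
  have h2 : Tendsto (fun N => chan A (ces A N σ) - ces A N σ) atTop (nhds 0) := by
    simp only [ces_diff]
    refine tendsto_pi_nhds.2 fun i => tendsto_pi_nhds.2 fun j => ?_
    simp only [Matrix.smul_apply, Matrix.sub_apply, smul_eq_mul, Matrix.zero_apply]
    rw [tendsto_zero_iff_norm_tendsto_zero]
    refine squeeze_zero (g := fun N : ℕ => 2 * (1 / ((N : ℝ) + 1))) (fun _ => norm_nonneg _) ?_ ?_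
    · intro N
      rw [norm_mul, norm_inv, Complex.norm_natCast, mul_comm, one_div]
      push_cast
      refine mul_le_mul_of_nonneg_right ?_ (by positivity)
      refine (norm_sub_le _ _).trans ?_
      linarith [dens_entry (dens_chan_pow hA h (N + 1)) i j, dens_entry h i j]
    · simpa using tendsto_one_div_add_atTop_nhds_zero_nat.const_mul (2 : ℝ)
  have h3 := h2.comp hφ.tendsto_atTop
  exact sub_eq_zero.1 (tendsto_nhds_unique h1 h3)

lemma ces_tendsto_all (hA : ∑ j, (A j)ᴴ * A j = 1) {ρinf : Matrix (Fin k) (Fin k) ℂ}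
    (huniq : ∀ σ, IsDensity σ → chan A σ = σ → σ = ρinf)
    (τ : Matrix (Fin k) (Fin k) ℂ) :
    Tendsto (fun N => ces A N τ) atTop (nhds (τ.trace • ρinf)) := by
  have hspan : τ ∈ Submodule.span ℂ {a : Matrix (Fin k) (Fin k) ℂ | a.PosSemidef} := by
    open scoped MatrixOrder in
    open scoped Matrix.Norms.L2Operator in
    have := CStarAlgebra.span_nonneg (A := Matrix (Fin k) (Fin k) ℂ)
    simp only [Matrix.nonneg_iff_posSemidef] at this
    rw [this]; trivial
  induction hspan using Submodule.span_induction with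
  | mem x hx =>
    by_cases h0 : x.trace = 0
    · have : x = 0 := (Matrix.PosSemidef.trace_eq_zero_iff hx).1 h0
      simp [this, ces]
    · have hd : IsDensity (x.trace⁻¹ • x) := by
        refine ⟨Matrix.PosSemidef.smul hx ?_, by simp [Matrix.trace_smul, h0]⟩
        rw [inv_nonneg]; exact Matrix.PosSemidef.trace_nonneg hx
      have := (ces_tendsto hA huniq hd).const_smul x.trace
      refine this.congr fun N => ?_
      simp only [ces, map_smul, ← Finset.smul_sum]
      rw [smul_comm, smul_smul x.trace, mul_inv_cancel₀ h0, one_smul]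
  | zero => simp [ces]
  | add x y _ _ hx hy =>
    have := hx.add hy
    rw [← add_smul, ← Matrix.trace_add] at this
    refine this.congr fun N => ?_
    simp [ces, Finset.sum_add_distrib]
  | smul c x _ hx =>
    have := hx.const_smul c
    rw [smul_smul, ← smul_eq_mul, ← Matrix.trace_smul] at this
    refine this.congr fun N => ?_
    simp only [ces, map_smul, ← Finset.smul_sum]
    rw [smul_comm]

lemma fix_eq (hA : ∑ j, (A j)ᴴ * A j = 1) {ρinf : Matrix (Fin k) (Fin k) ℂ}
    (huniq : ∀ σ, IsDensity σ → chan A σ = σ → σ = ρinf)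
    (τ : Matrix (Fin k) (Fin k) ℂ) (hτ : chan A τ = τ) : τ = τ.trace • ρinf := by
  refine tendsto_nhds_unique ?_ (ces_tendsto_all hA huniq τ)
  have hp : ∀ n, (chan A ^ n) τ = τ := by
    intro n
    induction n with
    | zero => rfl
    | succ n ih => rw [pow_succ', Module.End.mul_apply, ih, hτ]
  have : (fun N => ces A N τ) = fun _ => τ := by
    funext N
    simp only [ces, hp, Finset.sum_const, Finset.card_range, ← Nat.cast_smul_eq_nsmul ℂ, smul_smul]
    rw [inv_mul_cancel₀ (Nat.cast_ne_zero.2 (Nat.succ_ne_zero N)), one_smul]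
  rw [this]
  exact tendsto_const_nhds

lemma solvable (hA : ∑ j, (A j)ᴴ * A j = 1) {ρinf : Matrix (Fin k) (Fin k) ℂ}
    (huniq : ∀ σ, IsDensity σ → chan A σ = σ → σ = ρinf)
    (R : Matrix (Fin k) (Fin k) ℂ) (hR : (ρinf * R).trace = 0) :
    ∃ Z, Z - dch A (fun _ => 1) Z = R := by
  by_contra hne
  have hnm : R ∉ LinearMap.range (LinearMap.id - dch A (fun _ => 1)) := by
    rintro ⟨Z, hZ⟩
    exact hne ⟨Z, by simpa using hZ⟩
  obtain ⟨f, hfR, hf⟩ := Submodule.exists_le_ker_of_notMem hnm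
  let τ : Matrix (Fin k) (Fin k) ℂ := Matrix.of fun i j => f (Matrix.single j i 1)
  have hτ : ∀ X, f X = (τ * X).trace := by
    intro X
    conv_lhs => rw [Matrix.matrix_eq_sum_single X]
    simp only [map_sum, Matrix.trace, Matrix.diag, Matrix.mul_apply]
    rw [Finset.sum_comm]
    refine Finset.sum_congr rfl fun i _ => Finset.sum_congr rfl fun j _ => ?_
    rw [show Matrix.single j i (X j i) = X j i • Matrix.single j i (1 : ℂ) by simp [Matrix.smul_single]]
    rw [map_smul, smul_eq_mul, mul_comm]
    rfl
  have hfix : chan A τ = τ := by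
    rw [Matrix.ext_iff_trace_mul_right]
    intro X
    rw [trace_chan, ← hτ, ← hτ]
    have : f (X - dch A (fun _ => 1) X) = 0 := hf ⟨X, by simp⟩
    rw [map_sub, sub_eq_zero] at this
    exact this.symm
  apply hfR
  rw [hτ, fix_eq hA huniq τ hfix, Matrix.smul_mul, Matrix.trace_smul, hR, smul_zero]

end chan

lemma expand_id {V : Type*} [AddCommGroup V] [Module ℂ V] (P0 P1 P2 Pr : V →ₗ[ℂ] V)
    (e Y Z : V) (s v r : ℂ) (h0 : P0 e = e) (h1 : Y - P0 Y = P1 e)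
    (h2 : Z - P0 Z = (v / 2) • e - (1 / 2 : ℂ) • P2 e - P1 Y) :
    (P0 (e + (Complex.I * s) • Y + s ^ 2 • Z) + (Complex.I * s) • P1 (e + (Complex.I * s) • Y + s ^ 2 • Z)
      - (s ^ 2 / 2) • P2 (e + (Complex.I * s) • Y + s ^ 2 • Z)
      + s ^ 2 • Pr (e + (Complex.I * s) • Y + s ^ 2 • Z))
      - (1 - s ^ 2 * v / 2 + s ^ 2 * r) • (e + (Complex.I * s) • Y + s ^ 2 • Z)
    = s ^ 2 • (Pr (e + (Complex.I * s) • Y + s ^ 2 • Z) - r • (e + (Complex.I * s) • Y + s ^ 2 • Z)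
        + s • (Complex.I • P1 Z - (Complex.I / 2) • P2 Y + (Complex.I * v / 2) • Y)
        + s ^ 2 • (-(1 / 2 : ℂ) • P2 Z + (v / 2) • Z)) := by
  have h1' : P1 e = Y - P0 Y := h1.symm
  have h2' : P0 Z = Z - ((v / 2) • e - (1 / 2 : ℂ) • P2 e - P1 Y) := by rw [← h2]; abel
  simp only [map_add, map_smul, h0, h1', h2']
  have hI := Complex.I_sq
  match_scalars <;> first | ring1 | linear_combination (s ^ 2) * hI

lemma r_tendsto (c : ℝ) : Tendsto (fun s : ℝ =>
    (Complex.exp (Complex.I * s * c) - (1 + Complex.I * s * c - (s : ℂ) ^ 2 / 2 * c ^ 2)) / (s : ℂ) ^ 2)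
    (nhdsWithin 0 {0}ᶜ) (nhds 0) := by
  have h := Complex.exp_sub_sum_range_isBigO_pow 3
  have hc : Tendsto (fun s : ℝ => Complex.I * s * c) (nhds 0) (nhds 0) := by
    have : Continuous (fun s : ℝ => Complex.I * (s : ℂ) * c) := by fun_prop
    simpa using this.tendsto 0
  have h2 := (h.comp_tendsto hc).mono (nhdsWithin_le_nhds (s := {0}ᶜ))
  have h3 : (fun s : ℝ => Complex.exp (Complex.I * s * c) -
      (1 + Complex.I * s * c - (s : ℂ) ^ 2 / 2 * c ^ 2)) =O[nhdsWithin 0 {0}ᶜ]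
      (fun s : ℝ => s ^ 3) := by
    refine (h2.congr_left ?_).trans ?_
    · intro s
      simp [Finset.sum_range_succ, mul_pow, Complex.I_sq]
      ring
    · refine Asymptotics.IsBigO.of_bound (|c| ^ 3) (Eventually.of_forall fun s => ?_)
      simp [mul_pow]
      exact le_of_eq (by ring)
  have h4 : (fun s : ℝ => Complex.exp (Complex.I * s * c) -
      (1 + Complex.I * s * c - (s : ℂ) ^ 2 / 2 * c ^ 2)) =o[nhdsWithin 0 {0}ᶜ]
      (fun s : ℝ => (s : ℂ) ^ 2) := by
    refine h3.trans_isLittleO ?_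
    have := (Asymptotics.isLittleO_pow_pow (𝕜 := ℝ) (m := 2) (n := 3) (by norm_num)).mono
      (nhdsWithin_le_nhds (s := {0}ᶜ))
    refine this.trans_le fun s => ?_
    simp
  exact h4.tendsto_div_nhds_zero

lemma q_tendsto (v : ℝ) : Tendsto (fun s : ℝ =>
    (Complex.exp (-(s : ℂ) ^ 2 * v / 2) - (1 - (s : ℂ) ^ 2 * v / 2)) / (s : ℂ) ^ 2)
    (nhdsWithin 0 {0}ᶜ) (nhds 0) := by
  have h := Complex.exp_sub_sum_range_isBigO_pow 2
  have hc : Tendsto (fun s : ℝ => -(s : ℂ) ^ 2 * v / 2) (nhds 0) (nhds 0) := by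
    have : Continuous (fun s : ℝ => -(s : ℂ) ^ 2 * v / 2) := by fun_prop
    simpa using this.tendsto 0
  have h2 := (h.comp_tendsto hc).mono (nhdsWithin_le_nhds (s := {0}ᶜ))
  have h3 : (fun s : ℝ => Complex.exp (-(s : ℂ) ^ 2 * v / 2) - (1 - (s : ℂ) ^ 2 * v / 2))
      =O[nhdsWithin 0 {0}ᶜ] (fun s : ℝ => s ^ 4) := by
    refine (h2.congr_left ?_).trans ?_
    · intro s
      simp [Finset.sum_range_succ]
      ring
    · refine Asymptotics.IsBigO.of_bound (v ^ 2 / 4) (Eventually.of_forall fun s => ?_)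
      simp [mul_pow, div_pow]
      exact le_of_eq (by rw [← pow_mul, show |s| ^ 4 = s ^ 4 from (by decide : Even 4).pow_abs s]; norm_num; ring)
  have h4 : (fun s : ℝ => Complex.exp (-(s : ℂ) ^ 2 * v / 2) - (1 - (s : ℂ) ^ 2 * v / 2))
      =o[nhdsWithin 0 {0}ᶜ] (fun s : ℝ => (s : ℂ) ^ 2) := by
    refine h3.trans_isLittleO ?_
    have := (Asymptotics.isLittleO_pow_pow (𝕜 := ℝ) (m := 2) (n := 4) (by norm_num)).mono
      (nhdsWithin_le_nhds (s := {0}ᶜ))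
    refine this.trans_le fun s => ?_
    simp
  exact h4.tendsto_div_nhds_zero

section
variable {k : ℕ} {ι : Type} [Fintype ι] (A : ι → Matrix (Fin k) (Fin k) ℂ)

lemma dch_apply (w : ι → ℂ) (X : Matrix (Fin k) (Fin k) ℂ) :
    dch A w X = ∑ j, w j • ((A j)ᴴ * X * A j) := rfl

/-- the perturbed eigenvector -/
def Xs {k : ℕ} (Y Z : Matrix (Fin k) (Fin k) ℂ) (s : ℝ) : Matrix (Fin k) (Fin k) ℂ :=
  1 + (Complex.I * s) • Y + (s : ℂ) ^ 2 • Z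

lemma Xs_tendsto (Y Z : Matrix (Fin k) (Fin k) ℂ) : Tendsto (Xs Y Z) (nhds 0) (nhds 1) := by
  have : Continuous (Xs Y Z) := by unfold Xs; fun_prop
  simpa [Xs] using this.tendsto 0

variable {A}
lemma asymp (hA : ∑ j, (A j)ᴴ * A j = 1) (c : ι → ℝ) (v : ℝ) (Y Z : Matrix (Fin k) (Fin k) ℂ)
    (h1 : Y - dch A (fun _ => 1) Y = dch A (fun j => (c j : ℂ)) 1)
    (h2 : Z - dch A (fun _ => 1) Z = ((v : ℂ) / 2) • 1 - (1 / 2 : ℂ) • dch A (fun j => (c j : ℂ) ^ 2) 1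
      - dch A (fun j => (c j : ℂ)) Y) :
    ∃ E : ℝ → Matrix (Fin k) (Fin k) ℂ, Tendsto E (nhdsWithin 0 {0}ᶜ) (nhds 0) ∧
      ∀ s : ℝ, s ≠ 0 → dch A (fun j => Complex.exp (Complex.I * s * c j)) (Xs Y Z s)
        - Complex.exp (-(s : ℂ) ^ 2 * v / 2) • Xs Y Z s = (s : ℂ) ^ 2 • E s := by
  set r : ι → ℝ → ℂ := fun j s => (Complex.exp (Complex.I * s * c j) -
    (1 + Complex.I * s * c j - (s : ℂ) ^ 2 / 2 * c j ^ 2)) / (s : ℂ) ^ 2 with hr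
  set q : ℝ → ℂ := fun s =>
    (Complex.exp (-(s : ℂ) ^ 2 * v / 2) - (1 - (s : ℂ) ^ 2 * v / 2)) / (s : ℂ) ^ 2 with hq
  set T1 := (Complex.I • dch A (fun j => (c j : ℂ)) Z - (Complex.I / 2) • dch A (fun j => (c j : ℂ) ^ 2) Y
    + (Complex.I * v / 2) • Y)
  set T2 := (-(1 / 2 : ℂ) • dch A (fun j => (c j : ℂ) ^ 2) Z + ((v : ℂ) / 2) • Z)
  refine ⟨fun s => dch A (fun j => r j s) (Xs Y Z s) - q s • Xs Y Z s + (s : ℂ) • T1 + (s : ℂ) ^ 2 • T2,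
    ?_, ?_⟩
  · have hX := (Xs_tendsto Y Z).mono_left (nhdsWithin_le_nhds (s := {0}ᶜ))
    have e1 : Tendsto (fun s => dch A (fun j => r j s) (Xs Y Z s)) (nhdsWithin 0 {0}ᶜ) (nhds 0) := by
      simp only [dch_apply]
      have : Tendsto (fun s => ∑ j, r j s • ((A j)ᴴ * Xs Y Z s * A j)) (nhdsWithin 0 {0}ᶜ)
          (nhds (∑ j, (0 : ℂ) • ((A j)ᴴ * 1 * A j))) := by
        refine tendsto_finsetSum _ fun j _ => ?_
        refine (r_tendsto (c j)).smul ?_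
        have hcont : Continuous (fun X : Matrix (Fin k) (Fin k) ℂ => (A j)ᴴ * X * A j) := by fun_prop
        exact (hcont.tendsto 1).comp hX
      simpa using this
    have e2 : Tendsto (fun s => q s • Xs Y Z s) (nhdsWithin 0 {0}ᶜ) (nhds 0) := by
      have := (q_tendsto v).smul hX
      rwa [zero_smul] at this
    have e3 : Tendsto (fun s : ℝ => (s : ℂ) • T1 + (s : ℂ) ^ 2 • T2) (nhdsWithin 0 {0}ᶜ) (nhds 0) := by
      have hcont : Continuous (fun s : ℝ => (s : ℂ) • T1 + (s : ℂ) ^ 2 • T2) := by fun_prop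
      refine Tendsto.mono_left ?_ (nhdsWithin_le_nhds (s := {0}ᶜ))
      simpa using hcont.tendsto 0
    simpa [add_assoc] using (e1.sub e2).add e3
  · intro s hs
    have hs' : (s : ℂ) ^ 2 ≠ 0 := pow_ne_zero 2 (by exact_mod_cast hs)
    have := expand_id (dch A fun _ => 1) (dch A fun j => (c j : ℂ)) (dch A fun j => (c j : ℂ) ^ 2)
      (dch A fun j => r j s) 1 Y Z s v (q s) (dch_one hA) h1 h2
    change _ = (s : ℂ) ^ 2 • (dch A (fun j => r j s) (1 + (Complex.I * s) • Y + (s : ℂ) ^ 2 • Z)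
      - q s • (1 + (Complex.I * s) • Y + (s : ℂ) ^ 2 • Z) + (s : ℂ) • T1 + (s : ℂ) ^ 2 • T2)
    rw [← this]
    change _ = _ - _ • Xs Y Z s
    have hqs : Complex.exp (-(s : ℂ) ^ 2 * v / 2) = 1 - (s : ℂ) ^ 2 * v / 2 + (s : ℂ) ^ 2 * q s := by
      simp only [hq]; field_simp; ring
    rw [hqs]
    congr 1
    change _ = dch A _ (Xs Y Z s) + _ • dch A _ (Xs Y Z s) - _ • dch A _ (Xs Y Z s)
      + _ • dch A _ (Xs Y Z s)
    simp only [dch_apply, Finset.smul_sum, ← Finset.sum_add_distrib, ← Finset.sum_sub_distrib,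
      smul_smul, ← add_smul, ← sub_smul]
    refine Finset.sum_congr rfl fun j _ => ?_
    congr 1
    simp only [hr]; field_simp; ring
end

lemma dir_inj (d : ℕ) : Function.Injective (dir d) := by
  intro a b h
  have ha := a.isLt
  have hb := b.isLt
  by_cases h1 : (a : ℕ) < d
  · have := congrFun h ⟨a, h1⟩
    simp only [dir, h1, if_true] at this
    by_cases h2 : (b : ℕ) < d
    · simp only [h2, if_true] at this
      ext; by_contra hne; simp [hne] at this
    · simp only [h2, if_false] at this
      split_ifs at this
      omega
  · have := congrFun h ⟨(a : ℕ) - d, by omega⟩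
    simp only [dir, h1, if_true, if_false] at this
    by_cases h2 : (b : ℕ) < d
    · simp only [h2, if_true] at this
      split_ifs at this
    · simp only [h2, if_false] at this
      ext; by_contra hne
      rw [if_neg (by omega)] at this
      simp at this

instance matBorel {k : ℕ} : BorelSpace (Matrix (Fin k) (Fin k) ℂ) :=
  inferInstanceAs (BorelSpace (Fin k → Fin k → ℂ))

section
variable {k d : ℕ} {Ω : Type} {mΩ : MeasurableSpace Ω}
    {A : Fin (2 * d) → Matrix (Fin k) (Fin k) ℂ}
    {μ : Measure Ω} [IsProbabilityMeasure μ] {ℱ : Filtration ℕ mΩ}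
    {ρ : ℕ → Ω → Matrix (Fin k) (Fin k) ℂ} {X : ℕ → Ω → Fin d → ℤ}

/-- jump indicator -/
def jmp (X : ℕ → Ω → Fin d → ℤ) (n : ℕ) (j : Fin (2 * d)) (ω : Ω) : ℝ :=
  if X (n + 1) ω = X n ω + dir d j then (1 : ℝ) else 0

lemma jmp_meas (h : IsQTraj A μ ℱ ρ X) (n : ℕ) (j : Fin (2 * d)) : Measurable (jmp X n j) := by
  have h1 : Measurable (X (n + 1)) := (h.adapted_X (n + 1)).mono (ℱ.le _) le_rfl
  have h2 : Measurable (X n) := (h.adapted_X n).mono (ℱ.le _) le_rfl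
  exact Measurable.ite (measurableSet_eq_fun h1 (h2.add_const _)) measurable_const measurable_const

lemma jmp_int (h : IsQTraj A μ ℱ ρ X) (n : ℕ) (j : Fin (2 * d)) : Integrable (jmp X n j) μ := by
  refine Integrable.of_bound (jmp_meas h n j).aestronglyMeasurable 1 (Eventually.of_forall fun ω => ?_)
  unfold jmp; split_ifs <;> simp

lemma sum_tr (hA : ∑ j, (A j)ᴴ * A j = 1) {σ : Matrix (Fin k) (Fin k) ℂ} (h : IsDensity σ) :
    ∑ j, ((A j * σ * (A j)ᴴ).trace).re = 1 := by
  have := (dens_chan hA h).2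
  simp only [chan, LinearMap.coe_mk, AddHom.coe_mk, Matrix.trace_sum] at this
  rw [← Complex.re_sum, this, Complex.one_re]

lemma jmp_sum_le (n : ℕ) (ω : Ω) : ∑ j, jmp X n j ω ≤ 1 := by
  by_cases h : ∃ j, X (n + 1) ω = X n ω + dir d j
  · obtain ⟨j, hj⟩ := h
    rw [Finset.sum_eq_single j]
    · unfold jmp; split_ifs <;> simp
    · intro b _ hb
      unfold jmp
      rw [if_neg]
      intro hb'
      rw [hj] at hb'
      exact hb (dir_inj d (add_left_cancel hb')).symm
    · simp
  · push Not at h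
    simp [jmp, h]

lemma jmp_sum (hA : ∑ j, (A j)ᴴ * A j = 1) (h : IsQTraj A μ ℱ ρ X) (n : ℕ) :
    ∀ᵐ ω ∂μ, ∑ j, jmp X n j ω = 1 := by
  have hint : ∫ ω, (1 - ∑ j, jmp X n j ω) ∂μ = 0 := by
    rw [integral_sub (integrable_const _) (integrable_finsetSum _ fun j _ => jmp_int h n j),
      integral_finsetSum _ fun j _ => jmp_int h n j]
    have : ∀ j, ∫ ω, jmp X n j ω ∂μ = ∫ ω, (μ[jmp X n j | ℱ n]) ω ∂μ := fun j =>
      (integral_condExp (ℱ.le n)).symm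
    simp only [this]
    rw [← integral_finsetSum _ fun j _ => integrable_condExp]
    have e : ∀ᵐ ω ∂μ, ∑ j, (μ[jmp X n j | ℱ n]) ω = 1 := by
      have hall : ∀ᵐ ω ∂μ, ∀ j, (μ[jmp X n j | ℱ n]) ω = ((A j * ρ n ω * (A j)ᴴ).trace).re :=
        ae_all_iff.2 fun j => h.prob n j
      filter_upwards [hall, h.density n] with ω h1 h2
      simp only [h1]
      exact sum_tr hA h2
    rw [integral_congr_ae e]
    simp
  have h0 := (integral_eq_zero_iff_of_nonneg (fun ω => sub_nonneg.2 (jmp_sum_le n ω))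
    ((integrable_const _).sub (integrable_finsetSum _ fun j _ => jmp_int h n j))).1 hint
  filter_upwards [h0] with ω hω
  simp only [Pi.zero_apply] at hω
  linarith

lemma pull (h : IsQTraj A μ ℱ ρ X) (n : ℕ) (j : Fin (2 * d)) (G : Ω → ℂ)
    (hG : Measurable[ℱ n] G) (C : ℝ) (hC : ∀ᵐ ω ∂μ, ‖G ω‖ ≤ C) :
    ∫ ω, (jmp X n j ω : ℂ) * G ω ∂μ
      = ∫ ω, (((A j * ρ n ω * (A j)ᴴ).trace).re : ℂ) * G ω ∂μ := by
  have hGm : Measurable G := hG.mono (ℱ.le n) le_rfl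
  have hi : Integrable (fun ω => (ContinuousLinearMap.lsmul ℝ ℝ) (jmp X n j ω) (G ω)) μ := by
    refine Integrable.of_bound (C := C) ?_ ?_
    · simp only [ContinuousLinearMap.lsmul_apply]
      exact ((jmp_meas h n j).smul hGm).aestronglyMeasurable
    · filter_upwards [hC] with ω hω
      simp only [ContinuousLinearMap.lsmul_apply, norm_smul]
      refine le_trans ?_ hω
      refine mul_le_of_le_one_left (norm_nonneg _) ?_
      unfold jmp; split_ifs <;> simp
  have := condExp_bilin_of_stronglyMeasurable_right (m := ℱ n) (μ := μ)
    (ContinuousLinearMap.lsmul ℝ ℝ : ℝ →L[ℝ] ℂ →L[ℝ] ℂ) hG.stronglyMeasurable hi (jmp_int h n j)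
  have h1 := (integral_condExp (μ := μ) (ℱ.le n)
    (f := fun ω => (ContinuousLinearMap.lsmul ℝ ℝ : ℝ →L[ℝ] ℂ →L[ℝ] ℂ) (jmp X n j ω) (G ω))).symm
  rw [integral_congr_ae this] at h1
  simp only [ContinuousLinearMap.lsmul_apply, Complex.real_smul] at h1
  rw [h1]
  refine integral_congr_ae ?_
  filter_upwards [h.prob n j] with ω hω
  change (((μ[jmp X n j | ℱ n]) ω : ℝ) : ℂ) * _ = _
  rw [show (μ[jmp X n j | ℱ n]) ω = _ from hω]

/-- phase -/
def th (t m : Fin d → ℝ) (X : ℕ → Ω → Fin d → ℤ) (n : ℕ) (ω : Ω) : ℝ :=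
  ∑ i, t i * ((X n ω i : ℝ) - n * m i)

/-- the twisted expectation -/
def tw (μ : Measure Ω) (ρ : ℕ → Ω → Matrix (Fin k) (Fin k) ℂ) (t m : Fin d → ℝ)
    (X : ℕ → Ω → Fin d → ℤ) (s : ℝ) (n : ℕ) (M : Matrix (Fin k) (Fin k) ℂ) : ℂ :=
  ∫ ω, Complex.exp (Complex.I * s * th t m X n ω) * (ρ n ω * M).trace ∂μ

lemma norm_ph (s x : ℝ) : ‖Complex.exp (Complex.I * s * x)‖ = 1 := by
  rw [mul_assoc, ← Complex.ofReal_mul, mul_comm, Complex.norm_exp_ofReal_mul_I]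

lemma th_meas (h : IsQTraj A μ ℱ ρ X) (t m : Fin d → ℝ) (n : ℕ) : Measurable[ℱ n] (th t m X n) := by
  have hX : Measurable[ℱ n] (X n) := h.adapted_X n
  have hf : Measurable (fun x : Fin d → ℤ => ∑ i, t i * ((x i : ℝ) - n * m i)) := by
    refine Finset.measurable_fun_sum _ fun i _ => ?_
    refine Measurable.const_mul (Measurable.sub_const ?_ _) _
    exact (measurable_of_countable _).comp (measurable_pi_apply i)
  exact hf.comp hX

lemma ph_meas (h : IsQTraj A μ ℱ ρ X) (t m : Fin d → ℝ) (s : ℝ) (n : ℕ) :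
    Measurable[ℱ n] (fun ω => Complex.exp (Complex.I * s * th t m X n ω)) := by
  have hf : Measurable (fun x : ℝ => Complex.exp (Complex.I * s * x)) := by fun_prop
  exact hf.comp (th_meas h t m n)

lemma rho_meas (h : IsQTraj A μ ℱ ρ X) (n : ℕ) (f : Matrix (Fin k) (Fin k) ℂ → ℂ) (hf : Measurable f) :
    Measurable[ℱ n] (fun ω => f (ρ n ω)) := hf.comp (h.adapted_ρ n)

lemma tw_int (h : IsQTraj A μ ℱ ρ X) (t m : Fin d → ℝ) (s : ℝ) (n : ℕ)
    (M : Matrix (Fin k) (Fin k) ℂ) :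
    Integrable (fun ω => Complex.exp (Complex.I * s * th t m X n ω) * (ρ n ω * M).trace) μ := by
  refine Integrable.of_bound (C := nsum M) ?_ ?_
  · refine Measurable.aestronglyMeasurable ?_
    refine Measurable.mul ((ph_meas h t m s n).mono (ℱ.le n) le_rfl) ?_
    refine (rho_meas h n (fun σ => (σ * M).trace) ?_).mono (ℱ.le n) le_rfl
    exact Continuous.measurable (by fun_prop)
  · filter_upwards [h.density n] with ω hω
    rw [norm_mul, norm_ph, one_mul]
    exact dens_trace_le hω M

lemma tw_add (h : IsQTraj A μ ℱ ρ X) (t m : Fin d → ℝ) (s : ℝ) (n : ℕ)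
    (M N : Matrix (Fin k) (Fin k) ℂ) :
    tw μ ρ t m X s n (M + N) = tw μ ρ t m X s n M + tw μ ρ t m X s n N := by
  unfold tw
  rw [← integral_add (tw_int h t m s n M) (tw_int h t m s n N)]
  simp only [Matrix.mul_add, Matrix.trace_add, mul_add]

lemma tw_smul (t m : Fin d → ℝ) (s : ℝ) (n : ℕ) (c : ℂ) (M : Matrix (Fin k) (Fin k) ℂ) :
    tw μ ρ t m X s n (c • M) = c * tw μ ρ t m X s n M := by
  unfold tw
  rw [← integral_const_mul]
  congr 1; funext ω
  rw [Matrix.mul_smul, Matrix.trace_smul, smul_eq_mul]; ring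

lemma tw_norm (h : IsQTraj A μ ℱ ρ X) (t m : Fin d → ℝ) (s : ℝ) (n : ℕ)
    (M : Matrix (Fin k) (Fin k) ℂ) : ‖tw μ ρ t m X s n M‖ ≤ nsum M := by
  unfold tw
  have : ∀ᵐ ω ∂μ, ‖Complex.exp (Complex.I * s * th t m X n ω) * (ρ n ω * M).trace‖ ≤ nsum M := by
    filter_upwards [h.density n] with ω hω
    rw [norm_mul, norm_ph, one_mul]
    exact dens_trace_le hω M
  simpa using norm_integral_le_of_norm_le_const this

lemma nsum_nonneg (M : Matrix (Fin k) (Fin k) ℂ) : 0 ≤ nsum M := by unfold nsum; positivity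

lemma meas_tr (B M : Matrix (Fin k) (Fin k) ℂ) :
    Measurable (fun σ : Matrix (Fin k) (Fin k) ℂ => (B * σ * Bᴴ * M).trace) := by
  have : Continuous (fun σ : Matrix (Fin k) (Fin k) ℂ => (B * σ * Bᴴ * M).trace) :=
    (((continuous_const.matrix_mul continuous_id).matrix_mul continuous_const).matrix_mul
      continuous_const).matrix_trace
  exact this.measurable

lemma meas_tr' (B : Matrix (Fin k) (Fin k) ℂ) :
    Measurable (fun σ : Matrix (Fin k) (Fin k) ℂ => (B * σ * Bᴴ).trace) := by
  have : Continuous (fun σ : Matrix (Fin k) (Fin k) ℂ => (B * σ * Bᴴ).trace) :=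
    ((continuous_const.matrix_mul continuous_id).matrix_mul continuous_const).matrix_trace
  exact this.measurable

lemma meas_ratio (B M : Matrix (Fin k) (Fin k) ℂ) (z : ℂ) :
    Measurable (fun σ : Matrix (Fin k) (Fin k) ℂ =>
      z * ((B * σ * Bᴴ).trace⁻¹ * (B * σ * Bᴴ * M).trace)) :=
  ((meas_tr' B).inv.mul (meas_tr B M)).const_mul z

lemma norm_ratio {B σ : Matrix (Fin k) (Fin k) ℂ} (hσ : IsDensity σ) (M : Matrix (Fin k) (Fin k) ℂ) :
    ‖(B * σ * Bᴴ).trace⁻¹ * (B * σ * Bᴴ * M).trace‖ ≤ nsum M := by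
  have hp : (B * σ * Bᴴ).PosSemidef := hσ.1.mul_mul_conjTranspose_same _
  by_cases h0 : (B * σ * Bᴴ).trace = 0
  · simp [h0, nsum_nonneg]
  · have hd : IsDensity ((B * σ * Bᴴ).trace⁻¹ • (B * σ * Bᴴ)) := by
      refine ⟨Matrix.PosSemidef.smul hp ?_, by simp [Matrix.trace_smul, h0]⟩
      rw [inv_nonneg]; exact Matrix.PosSemidef.trace_nonneg hp
    have := dens_trace_le hd M
    rwa [Matrix.smul_mul, Matrix.trace_smul, smul_eq_mul] at this

lemma cancel_ratio {B σ : Matrix (Fin k) (Fin k) ℂ} (hσ : IsDensity σ) (M : Matrix (Fin k) (Fin k) ℂ) :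
    ((B * σ * Bᴴ).trace.re : ℂ) * ((B * σ * Bᴴ).trace⁻¹ * (B * σ * Bᴴ * M).trace)
      = (B * σ * Bᴴ * M).trace := by
  have hp : (B * σ * Bᴴ).PosSemidef := hσ.1.mul_mul_conjTranspose_same _
  have hre : ((B * σ * Bᴴ).trace.re : ℂ) = (B * σ * Bᴴ).trace := by
    have := Matrix.PosSemidef.trace_nonneg hp
    rw [Complex.le_def] at this
    apply Complex.ext
    · simp
    · simpa using this.2
  rw [hre]
  by_cases h0 : (B * σ * Bᴴ).trace = 0
  · have := (Matrix.PosSemidef.trace_eq_zero_iff hp).1 h0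
    simp [this]
  · rw [← mul_assoc, mul_inv_cancel₀ h0, one_mul]

lemma one_step (hA : ∑ j, (A j)ᴴ * A j = 1) (h : IsQTraj A μ ℱ ρ X) (t m : Fin d → ℝ) (s : ℝ) (n : ℕ)
    (M : Matrix (Fin k) (Fin k) ℂ) (c : Fin (2 * d) → ℝ)
    (hc : ∀ j, c j = ∑ i, t i * (dirR d j i - m i)) :
    tw μ ρ t m X s (n + 1) M
      = tw μ ρ t m X s n (dch A (fun j => Complex.exp (Complex.I * s * c j)) M) := by
  set G : Fin (2 * d) → Ω → ℂ := fun j ω => Complex.exp (Complex.I * s * th t m X n ω)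
    * (Complex.exp (Complex.I * s * c j) *
      ((A j * ρ n ω * (A j)ᴴ).trace⁻¹ * (A j * ρ n ω * (A j)ᴴ * M).trace)) with hG
  have hGm : ∀ j, Measurable[ℱ n] (G j) := by
    intro j
    refine Measurable.mul (ph_meas h t m s n) ?_
    refine rho_meas h n (fun σ => Complex.exp (Complex.I * s * c j) *
      ((A j * σ * (A j)ᴴ).trace⁻¹ * (A j * σ * (A j)ᴴ * M).trace)) ?_
    exact meas_ratio (A j) M _
  have hGb : ∀ j, ∀ᵐ ω ∂μ, ‖G j ω‖ ≤ nsum M := by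
    intro j
    filter_upwards [h.density n] with ω hω
    simp only [hG]
    rw [norm_mul, norm_mul, norm_ph, norm_ph, one_mul, one_mul]
    exact norm_ratio hω M
  have hGi : ∀ j, Integrable (fun ω => (jmp X n j ω : ℂ) * G j ω) μ := by
    intro j
    refine Integrable.of_bound (C := nsum M) ?_ ?_
    · refine Measurable.aestronglyMeasurable (Measurable.mul ?_ ((hGm j).mono (ℱ.le n) le_rfl))
      exact Complex.measurable_ofReal.comp (jmp_meas h n j)
    · filter_upwards [hGb j] with ω hω
      rw [norm_mul]
      refine le_trans (mul_le_of_le_one_left (norm_nonneg _) ?_) hω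
      unfold jmp; split_ifs <;> simp
  have hGi2 : ∀ j, Integrable (fun ω => (((A j * ρ n ω * (A j)ᴴ).trace).re : ℂ) * G j ω) μ := by
    intro j
    refine Integrable.of_bound (C := nsum ((A j)ᴴ * M * A j)) ?_ ?_
    · refine Measurable.aestronglyMeasurable (Measurable.mul ?_ ((hGm j).mono (ℱ.le n) le_rfl))
      refine (rho_meas h n (fun σ => (((A j * σ * (A j)ᴴ).trace).re : ℂ)) ?_).mono (ℱ.le n) le_rfl
      exact Complex.measurable_ofReal.comp (Complex.measurable_re.comp (meas_tr' (A j)))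
    · filter_upwards [h.density n] with ω hω
      have e : (((A j * ρ n ω * (A j)ᴴ).trace).re : ℂ) * G j ω =
        Complex.exp (Complex.I * s * th t m X n ω) * (Complex.exp (Complex.I * s * c j)
          * (A j * ρ n ω * (A j)ᴴ * M).trace) := by
        rw [← cancel_ratio (B := A j) hω M]; simp only [hG]; ring
      rw [e, norm_mul, norm_mul, norm_ph, norm_ph, one_mul, one_mul]
      have := dens_trace_le hω ((A j)ᴴ * M * A j)
      refine le_trans (le_of_eq (congrArg _ ?_)) this
      rw [Matrix.mul_assoc (A j * ρ n ω), Matrix.mul_assoc (A j), Matrix.trace_mul_comm (A j)]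
      simp only [Matrix.mul_assoc]
  have step1 : tw μ ρ t m X s (n + 1) M = ∫ ω, ∑ j, (jmp X n j ω : ℂ) * G j ω ∂μ := by
    unfold tw
    refine integral_congr_ae ?_
    have hup : ∀ᵐ ω ∂μ, ∀ j, X (n + 1) ω = X n ω + dir d j →
      ρ (n + 1) ω = ((A j * ρ n ω * (A j)ᴴ).trace)⁻¹ • (A j * ρ n ω * (A j)ᴴ) :=
      ae_all_iff.2 fun j => h.update n j
    filter_upwards [hup, jmp_sum hA h n] with ω h1 h2
    have h2' : ∑ j, (jmp X n j ω : ℂ) = 1 := by exact_mod_cast h2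
    rw [← one_mul (_ * _), ← h2', Finset.sum_mul]
    refine Finset.sum_congr rfl fun j _ => ?_
    by_cases hj : X (n + 1) ω = X n ω + dir d j
    · congr 1
      rw [h1 j hj, Matrix.smul_mul, Matrix.trace_smul, smul_eq_mul]
      simp only [hG]
      rw [← mul_assoc (Complex.exp _) (Complex.exp _), ← Complex.exp_add]
      congr 2
      have : th t m X (n + 1) ω = th t m X n ω + c j := by
        rw [hc]
        simp only [th, hj, ← Finset.sum_add_distrib]
        refine Finset.sum_congr rfl fun i _ => ?_
        simp only [Pi.add_apply, dirR]
        push_cast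
        ring
      rw [this]; push_cast; ring
    · simp [jmp, hj]
  rw [step1, integral_finsetSum _ fun j _ => hGi j]
  have step2 : ∀ j, ∫ ω, (jmp X n j ω : ℂ) * G j ω ∂μ = _ := fun j => pull h n j (G j) (hGm j) _ (hGb j)
  simp only [step2]
  rw [← integral_finsetSum _ fun j _ => hGi2 j]
  unfold tw
  refine integral_congr_ae ?_
  filter_upwards [h.density n] with ω hω
  rw [trace_dch, Finset.mul_sum]
  refine Finset.sum_congr rfl fun j _ => ?_
  rw [← cancel_ratio (B := A j) hω M]; simp only [hG]; ring
end

section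
variable {k d : ℕ} {Ω : Type} {mΩ : MeasurableSpace Ω}
    {A : Fin (2 * d) → Matrix (Fin k) (Fin k) ℂ}
    {μ : Measure Ω} [IsProbabilityMeasure μ] {ℱ : Filtration ℕ mΩ}
    {ρ : ℕ → Ω → Matrix (Fin k) (Fin k) ℂ} {X : ℕ → Ω → Fin d → ℤ}

lemma nsum_tendsto {α : Type*} {l : Filter α} {f : α → Matrix (Fin k) (Fin k) ℂ}
    (h : Tendsto f l (nhds 0)) : Tendsto (fun a => nsum (f a)) l (nhds 0) := by
  have hc : Continuous (fun M : Matrix (Fin k) (Fin k) ℂ => nsum M) := by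
    unfold nsum
    refine continuous_finsetSum _ fun i _ => continuous_finsetSum _ fun j _ => ?_
    exact (continuous_id.matrix_elem i j).norm
  have := (hc.tendsto 0).comp h
  simpa [nsum, Function.comp_def] using this

lemma tw_one (h : IsQTraj A μ ℱ ρ X) (t m : Fin d → ℝ) (s : ℝ) (n : ℕ) :
    tw μ ρ t m X s n 1 = ∫ ω, Complex.exp (Complex.I * s * th t m X n ω) ∂μ := by
  unfold tw
  refine integral_congr_ae ?_
  filter_upwards [h.density n] with ω hω
  rw [Matrix.mul_one, hω.2, mul_one]

lemma tw_iter (hA : ∑ j, (A j)ᴴ * A j = 1) (h : IsQTraj A μ ℱ ρ X) (t m : Fin d → ℝ) (s : ℝ)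
    (c : Fin (2 * d) → ℝ) (hc : ∀ j, c j = ∑ i, t i * (dirR d j i - m i))
    (M E : Matrix (Fin k) (Fin k) ℂ) (q : ℂ) (b : ℝ) (hb : 1 ≤ b) (hq : ‖q‖ ≤ b)
    (hM : dch A (fun j => Complex.exp (Complex.I * s * c j)) M - q • M = (s : ℂ) ^ 2 • E) (n : ℕ) :
    ‖tw μ ρ t m X s n M - q ^ n * tw μ ρ t m X s 0 M‖ ≤ n * b ^ n * (s ^ 2 * nsum E) := by
  have hδ : 0 ≤ s ^ 2 * nsum E := mul_nonneg (sq_nonneg _) (nsum_nonneg _)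
  induction n with
  | zero => simp
  | succ n ih =>
    rw [one_step hA h t m s n M c hc]
    rw [sub_eq_iff_eq_add.1 hM, tw_add h, tw_smul, tw_smul]
    have : (s : ℂ) ^ 2 * tw μ ρ t m X s n E + q * tw μ ρ t m X s n M - q ^ (n + 1) * tw μ ρ t m X s 0 M
      = (s : ℂ) ^ 2 * tw μ ρ t m X s n E + q * (tw μ ρ t m X s n M - q ^ n * tw μ ρ t m X s 0 M) := by ring
    rw [this]
    refine (norm_add_le _ _).trans ?_
    rw [norm_mul, norm_mul]
    have e1 : ‖(s : ℂ) ^ 2‖ * ‖tw μ ρ t m X s n E‖ ≤ b ^ (n + 1) * (s ^ 2 * nsum E) := by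
      have : ‖(s : ℂ) ^ 2‖ = s ^ 2 := by simp
      rw [this]
      calc s ^ 2 * ‖tw μ ρ t m X s n E‖ ≤ s ^ 2 * nsum E :=
            mul_le_mul_of_nonneg_left (tw_norm h t m s n E) (sq_nonneg _)
        _ ≤ _ := le_mul_of_one_le_left hδ (one_le_pow₀ hb)
    have e2 : ‖q‖ * ‖tw μ ρ t m X s n M - q ^ n * tw μ ρ t m X s 0 M‖
        ≤ b * (n * b ^ n * (s ^ 2 * nsum E)) :=
      mul_le_mul hq ih (norm_nonneg _) (by linarith)
    push_cast
    calc _ ≤ b ^ (n + 1) * (s ^ 2 * nsum E) + b * (n * b ^ n * (s ^ 2 * nsum E)) := add_le_add e1 e2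
      _ = _ := by ring

lemma sn_tendsto : Tendsto (fun n : ℕ => (Real.sqrt n)⁻¹) atTop (nhdsWithin 0 {0}ᶜ) := by
  refine tendsto_nhdsWithin_iff.2 ⟨?_, ?_⟩
  · exact tendsto_inv_atTop_zero.comp (Real.tendsto_sqrt_atTop.comp tendsto_natCast_atTop_atTop)
  · filter_upwards [eventually_gt_atTop 0] with n hn
    have : 0 < Real.sqrt n := Real.sqrt_pos.2 (by exact_mod_cast hn)
    simpa using this.ne'

lemma char_lim (hA : ∑ j, (A j)ᴴ * A j = 1) (h : IsQTraj A μ ℱ ρ X) (t m : Fin d → ℝ)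
    (c : Fin (2 * d) → ℝ) (hc : ∀ j, c j = ∑ i, t i * (dirR d j i - m i))
    (v : ℝ) (Y Z : Matrix (Fin k) (Fin k) ℂ)
    (h1 : Y - dch A (fun _ => 1) Y = dch A (fun j => (c j : ℂ)) 1)
    (h2 : Z - dch A (fun _ => 1) Z = ((v : ℂ) / 2) • 1 - (1 / 2 : ℂ) • dch A (fun j => (c j : ℂ) ^ 2) 1
      - dch A (fun j => (c j : ℂ)) Y) :
    Tendsto (fun n : ℕ => ∫ ω, Complex.exp (Complex.I * ((Real.sqrt n)⁻¹ : ℝ) * th t m X n ω) ∂μ)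
      atTop (nhds (Complex.exp (-(v : ℂ) / 2))) := by
  obtain ⟨E, hE, hid⟩ := asymp hA c v Y Z h1 h2
  set s : ℕ → ℝ := fun n => (Real.sqrt n)⁻¹ with hs
  have hs0 : Tendsto s atTop (nhds 0) := sn_tendsto.mono_right nhdsWithin_le_nhds
  have hXs : Tendsto (fun n => nsum (Xs Y Z (s n) - 1)) atTop (nhds 0) := by
    refine nsum_tendsto ?_
    have := ((Xs_tendsto Y Z).comp hs0).sub_const 1
    rwa [sub_self] at this
  have hsmall : ∀ p : ℕ → ℕ, Tendsto (fun n => tw μ ρ t m X (s n) (p n) (Xs Y Z (s n) - 1)) atTop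
      (nhds 0) := fun p => squeeze_zero_norm (fun n => tw_norm h t m _ _ _) hXs
  have hsplit : ∀ n j, tw μ ρ t m X (s n) j (Xs Y Z (s n)) =
      tw μ ρ t m X (s n) j (Xs Y Z (s n) - 1) + tw μ ρ t m X (s n) j 1 := by
    intro n j
    rw [← tw_add h, sub_add_cancel]
  have h01 : Tendsto (fun n => tw μ ρ t m X (s n) 0 1) atTop (nhds 1) := by
    simp only [tw_one h]
    have : Tendsto (fun n => ∫ ω, Complex.exp (Complex.I * (s n : ℂ) * th t m X 0 ω) ∂μ) atTop
        (nhds (∫ _, (1 : ℂ) ∂μ)) := by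
      refine tendsto_integral_of_dominated_convergence (fun _ => (1 : ℝ)) ?_ (integrable_const _) ?_ ?_
      · intro n
        exact ((ph_meas h t m (s n) 0).mono (ℱ.le 0) le_rfl).aestronglyMeasurable
      · intro n
        exact Eventually.of_forall fun ω => (norm_ph _ _).le
      · refine Eventually.of_forall fun ω => ?_
        have hcont : Continuous (fun x : ℝ => Complex.exp (Complex.I * (x : ℂ) * th t m X 0 ω)) := by
          fun_prop
        have := (hcont.tendsto 0).comp hs0
        simpa [Function.comp_def] using this
    simpa using this
  have h0 : Tendsto (fun n => tw μ ρ t m X (s n) 0 (Xs Y Z (s n))) atTop (nhds 1) := by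
    simp only [hsplit]
    simpa using (hsmall fun _ => 0).add h01
  have hdiff : Tendsto (fun n => tw μ ρ t m X (s n) n (Xs Y Z (s n))
      - Complex.exp (-(v : ℂ) / 2) * tw μ ρ t m X (s n) 0 (Xs Y Z (s n))) atTop (nhds 0) := by
    have hEn : Tendsto (fun n => Real.exp (|v| / 2) * nsum (E (s n))) atTop (nhds 0) := by
      have := (nsum_tendsto (hE.comp sn_tendsto)).const_mul (Real.exp (|v| / 2))
      simpa using this
    refine squeeze_zero_norm' ?_ hEn
    filter_upwards [eventually_gt_atTop 0] with n hn
    have hnr : (0 : ℝ) < n := by exact_mod_cast hn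
    have hsq : (s n) ^ 2 = (n : ℝ)⁻¹ := by
      simp only [hs, inv_pow, Real.sq_sqrt hnr.le]
    have hsne : s n ≠ 0 := by
      have : 0 < Real.sqrt n := Real.sqrt_pos.2 hnr
      exact (inv_pos.2 this).ne'
    have key := tw_iter hA h t m (s n) c hc (Xs Y Z (s n)) (E (s n))
      (Complex.exp (-(s n : ℂ) ^ 2 * v / 2)) (Real.exp ((s n) ^ 2 * |v| / 2))
      (Real.one_le_exp (by positivity)) ?_ (hid (s n) hsne) n
    · have hp1 : Complex.exp (-(s n : ℂ) ^ 2 * v / 2) ^ n = Complex.exp (-(v : ℂ) / 2) := by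
        rw [← Complex.exp_nat_mul]
        congr 1
        have : (s n : ℂ) ^ 2 = (n : ℂ)⁻¹ := by
          rw [← Complex.ofReal_pow, hsq]; push_cast; rfl
        rw [this]
        have : (n : ℂ) ≠ 0 := by exact_mod_cast hn.ne'
        field_simp
      have hp2 : Real.exp ((s n) ^ 2 * |v| / 2) ^ n = Real.exp (|v| / 2) := by
        rw [← Real.exp_nat_mul]
        congr 1
        rw [hsq]; field_simp
      rw [hp1, hp2, hsq] at key
      refine key.trans (le_of_eq ?_)
      field_simp
    · rw [Complex.norm_exp]
      refine Real.exp_le_exp.2 ?_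
      have : (-(s n : ℂ) ^ 2 * v / 2) = ((-(s n) ^ 2 * v / 2 : ℝ) : ℂ) := by push_cast; ring
      rw [this, Complex.ofReal_re]
      nlinarith [neg_abs_le v, sq_nonneg (s n)]
  have hfin := (hdiff.add (h0.const_mul (Complex.exp (-(v : ℂ) / 2)))).sub (hsmall fun n => n)
  simp only [zero_add, mul_one, sub_zero] at hfin
  refine hfin.congr fun n => ?_
  rw [sub_add_cancel, hsplit, add_sub_cancel_left, tw_one h]
end

lemma sum_lohi {d : ℕ} {M : Type*} [AddCommMonoid M] (f : Fin (2 * d) → M) :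
    ∑ j, f j = ∑ i : Fin d, f (lo i) + ∑ i : Fin d, f (hi i) := by
  have e : d + d = 2 * d := by omega
  rw [← Equiv.sum_comp (finCongr e) f, Fin.sum_univ_add]
  congr 1
  refine Finset.sum_congr rfl fun i _ => congrArg f ?_
  ext; simp [hi]

lemma dirR_lo {d : ℕ} (i a : Fin d) : dirR d (lo i) a = if a = i then 1 else 0 := by
  by_cases h : a = i
  · simp [dirR, dir, lo, h]
  · have h2 : (a : ℕ) ≠ (i : ℕ) := fun e => h (Fin.ext e)
    simp [dirR, dir, lo, h, h2]

lemma dirR_hi {d : ℕ} (i a : Fin d) : dirR d (hi i) a = if a = i then -1 else 0 := by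
  simp only [dirR, dir, hi, Fin.ext_iff]
  have := i.isLt
  split_ifs <;> first | omega | simp

lemma quad {d : ℕ} (t m γ : Fin d → ℝ) (p : Fin (2 * d) → ℝ) (g : Fin (2 * d) → Fin d → ℝ)
    (c : Fin (2 * d) → ℝ) (hc : ∀ j, c j = ∑ i, t i * (dirR d j i - m i))
    (hp : ∑ j, p j = 1) (hm : ∀ i, m i = ∑ j, p j * dirR d j i) (hγ : ∀ i, γ i = ∑ j, g j i) :
    ∑ i, ∑ j, t i * ((if i = j then p (lo i) + p (hi i) else 0) - m i * m j
      + (g (lo i) j + g (lo j) i - g (hi i) j - g (hi j) i) - (m i * γ j + m j * γ i)) * t j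
    = ∑ j, c j ^ 2 * p j + 2 * ∑ j, c j * ∑ i, t i * g j i := by
  set M := ∑ i, t i * m i with hM
  set Γ := ∑ i, t i * γ i with hΓ
  set u : Fin (2 * d) → ℝ := fun j => ∑ i, t i * dirR d j i with hu
  set hh : Fin (2 * d) → ℝ := fun j => ∑ i, t i * g j i with hhd
  have hcu : ∀ j, c j = u j - M := by
    intro j; rw [hc]; simp only [hu, hM, mul_sub, Finset.sum_sub_distrib]
  have hul : ∀ i, u (lo i) = t i := by intro i; simp [hu, dirR_lo]
  have huh : ∀ i, u (hi i) = -t i := by intro i; simp [hu, dirR_hi]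
  have hpu : ∑ j, p j * u j = M := by
    simp only [hM, hm, hu, Finset.mul_sum]
    rw [Finset.sum_comm]
    exact Finset.sum_congr rfl fun i _ => Finset.sum_congr rfl fun j _ => by ring
  have hhs : ∑ j, hh j = Γ := by
    simp only [hhd, hΓ, hγ, Finset.mul_sum]
    rw [Finset.sum_comm]
  have r1 : ∑ j, c j ^ 2 * p j = ∑ j, u j ^ 2 * p j - M ^ 2 := by
    have : ∀ j, c j ^ 2 * p j = u j ^ 2 * p j - 2 * M * (p j * u j) + M ^ 2 * p j := by
      intro j; rw [hcu]; ring
    simp only [this, Finset.sum_add_distrib, Finset.sum_sub_distrib, ← Finset.mul_sum, hpu, hp]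
    ring
  have r2 : ∑ j, c j * hh j = ∑ j, u j * hh j - M * Γ := by
    simp only [hcu, sub_mul, Finset.sum_sub_distrib, ← Finset.mul_sum, hhs]
  have r3 : ∑ j, u j ^ 2 * p j = ∑ i, t i ^ 2 * (p (lo i) + p (hi i)) := by
    rw [sum_lohi, ← Finset.sum_add_distrib]
    refine Finset.sum_congr rfl fun i _ => ?_
    rw [hul, huh]; ring
  have r4 : ∑ j, u j * hh j = ∑ i, t i * (hh (lo i) - hh (hi i)) := by
    rw [sum_lohi, ← Finset.sum_add_distrib]
    refine Finset.sum_congr rfl fun i _ => ?_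
    rw [hul, huh]; ring
  change _ = _ + 2 * ∑ j, c j * hh j
  rw [r1, r2, r3, r4]
  have l0 : ∀ i j, t i * ((if i = j then p (lo i) + p (hi i) else 0) - m i * m j
      + (g (lo i) j + g (lo j) i - g (hi i) j - g (hi j) i) - (m i * γ j + m j * γ i)) * t j
    = (if i = j then t i * (p (lo i) + p (hi i)) * t j else 0) - (t i * m i) * (t j * m j)
      + (t i * (t j * g (lo i) j - t j * g (hi i) j)) + (t j * (t i * g (lo j) i - t i * g (hi j) i))
      - (t i * m i) * (t j * γ j) - (t i * γ i) * (t j * m j) := by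
    intro i j; split_ifs <;> ring
  simp only [l0, Finset.sum_add_distrib, Finset.sum_sub_distrib, ← Finset.mul_sum, ← Finset.sum_mul]
  have l1 : ∑ i, ∑ j, t j * (t i * g (lo j) i - t i * g (hi j) i)
      = ∑ i, t i * (hh (lo i) - hh (hi i)) := by
    rw [Finset.sum_comm]
    simp only [hhd, ← Finset.sum_sub_distrib, Finset.mul_sum]
  have l1' : ∑ x, ∑ j, t j * (t x * g (lo j) x)
      - ∑ x, ∑ j, t j * (t x * g (hi j) x) = ∑ i, t i * (hh (lo i) - hh (hi i)) := by
    rw [← l1]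
    simp only [mul_sub, Finset.sum_sub_distrib]
  simp only [Finset.sum_ite_eq, Finset.mem_univ, if_true]
  simp only [mul_sub, Finset.sum_sub_distrib] at l1 ⊢
  simp only [← hM, ← hΓ]
  have l2 : ∑ x, t x * (p (lo x) + p (hi x)) * t x = ∑ x, t x ^ 2 * (p (lo x) + p (hi x)) :=
    Finset.sum_congr rfl fun i _ => by ring
  simp only [hhd] at *
  linarith

section
variable {k d : ℕ} {Ω : Type} {mΩ : MeasurableSpace Ω}
    {A : Fin (2 * d) → Matrix (Fin k) (Fin k) ℂ}
    {μ : Measure Ω} [IsProbabilityMeasure μ] {ℱ : Filtration ℕ mΩ}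
    {ρ : ℕ → Ω → Matrix (Fin k) (Fin k) ℂ} {X : ℕ → Ω → Fin d → ℤ}

/-- the hermitian test matrix -/
def Yt (LL : Fin d → Matrix (Fin k) (Fin k) ℂ) (t : Fin d → ℝ) : Matrix (Fin k) (Fin k) ℂ :=
  ∑ i, (t i : ℂ) • ((1 / 2 : ℂ) • (LL i + (LL i)ᴴ))

lemma psd_tr_real {P : Matrix (Fin k) (Fin k) ℂ} (hP : P.PosSemidef) :
    P.trace = ((P.trace).re : ℂ) := by
  have := hP.trace_nonneg
  rw [Complex.le_def] at this
  apply Complex.ext <;> simp [← this.2]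

lemma tr_Yt (LL : Fin d → Matrix (Fin k) (Fin k) ℂ) (t : Fin d → ℝ)
    {P : Matrix (Fin k) (Fin k) ℂ} (hP : P.PosSemidef) :
    (P * Yt LL t).trace = ((∑ i, t i * ((P * LL i).trace).re : ℝ) : ℂ) := by
  unfold Yt
  rw [Finset.mul_sum, Matrix.trace_sum, Complex.ofReal_sum]
  refine Finset.sum_congr rfl fun i _ => ?_
  rw [Matrix.mul_smul, Matrix.mul_smul, Matrix.trace_smul, Matrix.trace_smul, Matrix.mul_add,
    Matrix.trace_add]
  have : (P * (LL i)ᴴ).trace = star ((P * LL i).trace) := by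
    rw [← Matrix.trace_conjTranspose, Matrix.conjTranspose_mul, hP.1.eq, Matrix.trace_mul_comm]
  rw [this]
  have e : star ((P * LL i).trace) = (starRingEnd ℂ) ((P * LL i).trace) := rfl
  rw [e, Complex.add_conj]
  simp only [smul_eq_mul]
  push_cast
  ring

lemma hLL_ct (L : Matrix (Fin k) (Fin k) ℂ) (a : Fin (2 * d) → ℝ) (b : ℝ)
    (h : L - (∑ j, (A j)ᴴ * L * A j) = (∑ j, a j • ((A j)ᴴ * A j)) - b • 1) :
    Lᴴ - (∑ j, (A j)ᴴ * Lᴴ * A j) = (∑ j, a j • ((A j)ᴴ * A j)) - b • 1 := by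
  have := congrArg Matrix.conjTranspose h
  simp only [Matrix.conjTranspose_sub, Matrix.conjTranspose_sum, Matrix.conjTranspose_mul,
    Matrix.conjTranspose_smul, Matrix.conjTranspose_conjTranspose, Matrix.conjTranspose_one,
    star_trivial] at this
  simpa only [Matrix.mul_assoc] using this

lemma Yt_eq (hA : ∑ j, (A j)ᴴ * A j = 1) (m : Fin d → ℝ) 
    (LL : Fin d → Matrix (Fin k) (Fin k) ℂ)
    (hLL : ∀ i : Fin d, LL i - (∑ j, (A j)ᴴ * LL i * A j) =
        (∑ j, dirR d j i • ((A j)ᴴ * A j)) - m i • (1 : Matrix (Fin k) (Fin k) ℂ))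
    (t : Fin d → ℝ) (c : Fin (2 * d) → ℝ) (hc : ∀ j, c j = ∑ i, t i * (dirR d j i - m i)) :
    Yt LL t - dch A (fun _ => 1) (Yt LL t) = dch A (fun j => (c j : ℂ)) 1 := by
  have e : ∀ i, ((1 / 2 : ℂ) • (LL i + (LL i)ᴴ)) - dch A (fun _ => 1) ((1 / 2 : ℂ) • (LL i + (LL i)ᴴ))
      = dch A (fun j => ((dirR d j i - m i : ℝ) : ℂ)) 1 := by
    intro i
    have h1 := hLL i
    have h2 := hLL_ct (LL i) _ _ (hLL i)
    have h3 : dch A (fun j => ((dirR d j i - m i : ℝ) : ℂ)) 1 =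
        (∑ j, dirR d j i • ((A j)ᴴ * A j)) - m i • (1 : Matrix (Fin k) (Fin k) ℂ) := by
      rw [dch_apply]
      simp only [Matrix.mul_one]
      rw [← hA, Finset.smul_sum, ← Finset.sum_sub_distrib]
      refine Finset.sum_congr rfl fun j _ => ?_
      rw [← sub_smul, Complex.coe_smul]
    rw [h3, map_smul, map_add, dch_apply, dch_apply]
    simp only [one_smul]
    rw [← smul_sub, add_sub_add_comm, h1, h2, ← two_smul ℂ, smul_smul]
    norm_num
  unfold Yt
  rw [map_sum, ← Finset.sum_sub_distrib]
  simp only [map_smul, ← smul_sub] at e ⊢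
  simp only [e]
  simp only [dch_apply, Finset.smul_sum]
  rw [Finset.sum_comm]
  refine Finset.sum_congr rfl fun j _ => ?_
  simp only [smul_smul, ← Finset.sum_smul]
  congr 1
  rw [hc]; push_cast; rfl

lemma cf_lim
    (hA : ∑ j, (A j)ᴴ * A j = 1)
    (ρinf : Matrix (Fin k) (Fin k) ℂ) (hρinf : IsDensity ρinf)
    (hinv : (∑ j, A j * ρinf * (A j)ᴴ) = ρinf)
    (huniq : ∀ σ, IsDensity σ → (∑ j, A j * σ * (A j)ᴴ) = σ → σ = ρinf)
    (LL : Fin d → Matrix (Fin k) (Fin k) ℂ)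
    (hLL : ∀ i : Fin d,
      LL i - (∑ j, (A j)ᴴ * LL i * A j) =
        (∑ j, dirR d j i • ((A j)ᴴ * A j)) -
          mvec A ρinf i • (1 : Matrix (Fin k) (Fin k) ℂ))
    (hQT : IsQTraj A μ ℱ ρ X) (t : Fin d → ℝ) :
    Tendsto (fun n : ℕ => ∫ ω, Complex.exp (Complex.I * ((Real.sqrt n)⁻¹ : ℝ) *
      th t (mvec A ρinf) X n ω) ∂μ) atTop
      (nhds (Complex.exp (-((∑ i, ∑ j, t i * Cmat A ρinf LL i j * t j : ℝ) : ℂ) / 2))) := by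
  set v : ℝ := ∑ i, ∑ j, t i * Cmat A ρinf LL i j * t j with hv
  set c : Fin (2 * d) → ℝ := fun j => ∑ i, t i * (dirR d j i - mvec A ρinf i) with hcd
  have hc : ∀ j, c j = ∑ i, t i * (dirR d j i - mvec A ρinf i) := fun j => rfl
  have hpsd : ∀ j, (A j * ρinf * (A j)ᴴ).PosSemidef := fun j => hρinf.1.mul_mul_conjTranspose_same _
  have hq := quad t (mvec A ρinf) (fun i => ((ρinf * LL i).trace).re)
    (fun j => ((A j * ρinf * (A j)ᴴ).trace).re)
    (fun j i => ((A j * ρinf * (A j)ᴴ * LL i).trace).re) c hc (sum_tr hA hρinf)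
    (fun i => rfl) (fun i => by
      conv_lhs => rw [← hinv]
      rw [Finset.sum_mul, Matrix.trace_sum, Complex.re_sum])
  have hq' : v = _ := hq
  obtain ⟨Z, hZ⟩ := solvable hA (ρinf := ρinf) huniq
    (((v : ℂ) / 2) • 1 - (1 / 2 : ℂ) • dch A (fun j => (c j : ℂ) ^ 2) 1
      - dch A (fun j => (c j : ℂ)) (Yt LL t)) (by
    rw [Matrix.mul_sub, Matrix.mul_sub, Matrix.trace_sub, Matrix.trace_sub, trace_dch,
      Matrix.mul_smul, Matrix.mul_smul, Matrix.trace_smul, Matrix.trace_smul, trace_dch,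
      Matrix.mul_one, hρinf.2]
    have a1 : ∀ j, (A j * ρinf * (A j)ᴴ * 1).trace = (((A j * ρinf * (A j)ᴴ).trace).re : ℂ) := by
      intro j; rw [Matrix.mul_one]; exact psd_tr_real (hpsd j)
    simp only [a1, tr_Yt LL t (hpsd _)]
    rw [hq']
    push_cast
    simp only [smul_eq_mul]
    ring)
  exact char_lim hA hQT t _ c hc v (Yt LL t) Z (Yt_eq hA _ LL hLL t c hc) hZ

lemma v_nonneg {v : ℝ} (t m : Fin d → ℝ)
    (h : Tendsto (fun n : ℕ => ∫ ω, Complex.exp (Complex.I * ((Real.sqrt n)⁻¹ : ℝ) *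
      th t m X n ω) ∂μ) atTop (nhds (Complex.exp (-(v : ℂ) / 2)))) : 0 ≤ v := by
  have := le_of_tendsto h.norm (Eventually.of_forall fun n => by
    have := norm_integral_le_of_norm_le_const (μ := μ) (C := 1) (f := fun ω =>
      Complex.exp (Complex.I * ((Real.sqrt n)⁻¹ : ℝ) * th t m X n ω))
      (Eventually.of_forall fun ω => (norm_ph _ _).le)
    simpa using this)
  rw [Complex.norm_exp] at this
  have e : (-(v : ℂ) / 2).re = - v / 2 := by
    rw [← Complex.ofReal_neg]
    exact_mod_cast Complex.ofReal_re (-v / 2)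
  rw [e, Real.exp_le_one_iff] at this
  linarith

lemma Cmat_symm (ρinf : Matrix (Fin k) (Fin k) ℂ) (LL : Fin d → Matrix (Fin k) (Fin k) ℂ)
    (i j : Fin d) : Cmat A ρinf LL i j = Cmat A ρinf LL j i := by
  by_cases h : i = j
  · rw [h]
  · unfold Cmat
    rw [if_neg h, if_neg (Ne.symm h)]; ring

end

/-- (Central Limit Theorem for open quantum random walks.) Under (H1),
`(X_n - n m)/√n` converges in distribution to the centered Gaussian `N(0, C)` on `ℝ^d`
(characterized by its characteristic function `l ↦ exp(-(l·Cl)/2)`), the matrix `C`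
being symmetric positive semidefinite. -/
theorem stmt8 {k d : ℕ} (hd : 1 ≤ d)
    (A : Fin (2 * d) → Matrix (Fin k) (Fin k) ℂ)
    (hA : ∑ j, (A j)ᴴ * A j = 1)
    (ρinf : Matrix (Fin k) (Fin k) ℂ) (hρinf : IsDensity ρinf)
    (hinv : (∑ j, A j * ρinf * (A j)ᴴ) = ρinf)
    (huniq : ∀ σ, IsDensity σ → (∑ j, A j * σ * (A j)ᴴ) = σ → σ = ρinf)
    (LL : Fin d → Matrix (Fin k) (Fin k) ℂ)
    (hLL : ∀ i : Fin d,
      LL i - (∑ j, (A j)ᴴ * LL i * A j) =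
        (∑ j, dirR d j i • ((A j)ᴴ * A j)) -
          mvec A ρinf i • (1 : Matrix (Fin k) (Fin k) ℂ))
    {Ω : Type} {mΩ : MeasurableSpace Ω} (μ : Measure Ω) [IsProbabilityMeasure μ]
    (ℱ : Filtration ℕ mΩ)
    (ρ : ℕ → Ω → Matrix (Fin k) (Fin k) ℂ) (X : ℕ → Ω → Fin d → ℤ)
    (hQT : IsQTraj A μ ℱ ρ X) :
    (∀ i j, Cmat A ρinf LL i j = Cmat A ρinf LL j i) ∧
    Matrix.PosSemidef (Matrix.of fun i j => Cmat A ρinf LL i j) ∧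
    ∃ ν : Measure (Fin d → ℝ), IsProbabilityMeasure ν ∧
      (∀ l : Fin d → ℝ,
        ∫ x, Complex.exp (Complex.I * ((∑ j, l j * x j : ℝ) : ℂ)) ∂ν =
          Complex.exp (-(((∑ i, ∑ j, l i * Cmat A ρinf LL i j * l j) / 2 : ℝ) : ℂ))) ∧
      ∀ f : BoundedContinuousFunction (Fin d → ℝ) ℝ,
        Tendsto
          (fun n : ℕ =>
            ∫ ω, f (fun j => ((X n ω j : ℝ) - n * mvec A ρinf j) / Real.sqrt n) ∂μ)
          atTop (nhds (∫ x, f x ∂ν)) := by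
  have hcf := fun t => cf_lim (μ := μ) hA ρinf hρinf hinv huniq LL hLL hQT t
  have hnn := fun t => v_nonneg t _ (hcf t)
  have hsym : ∀ i j, Cmat A ρinf LL i j = Cmat A ρinf LL j i := Cmat_symm ρinf LL
  have hquad : ∀ t : Fin d → ℝ, t ⬝ᵥ ((Matrix.of fun i j => Cmat A ρinf LL i j) *ᵥ t)
      = ∑ i, ∑ j, t i * Cmat A ρinf LL i j * t j := by
    intro t
    simp only [dotProduct, mulVec, Matrix.of_apply, Finset.mul_sum, mul_assoc]
  have hpsd : Matrix.PosSemidef (Matrix.of fun i j => Cmat A ρinf LL i j) := by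
    refine Matrix.PosSemidef.of_dotProduct_mulVec_nonneg ?_ ?_
    · ext i j
      simp [Matrix.conjTranspose_apply, hsym i j]
    · intro t
      rw [star_trivial, hquad]
      exact hnn t
  refine ⟨hsym, hpsd, ?_⟩
  set E := EuclideanSpace ℝ (Fin d) with hE
  set G : Measure E := ProbabilityTheory.multivariateGaussian 0
    (Matrix.of fun i j => Cmat A ρinf LL i j) with hG
  have hofm : Measurable (fun x : E => (WithLp.ofLp x : Fin d → ℝ)) :=
    (PiLp.continuous_ofLp 2 _).measurable
  have hofc : Continuous (fun x : E => (WithLp.ofLp x : Fin d → ℝ)) := PiLp.continuous_ofLp 2 _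
  have hGcf : ∀ l : E, charFun G l =
      Complex.exp (-((∑ i, ∑ j, l i * Cmat A ρinf LL i j * l j : ℝ) : ℂ) / 2) := by
    intro l
    rw [hG, ProbabilityTheory.charFun_multivariateGaussian hpsd]
    have := hquad (WithLp.ofLp l)
    rw [this]
    congr 1
    simp [neg_div]
  have hinner : ∀ x l : E, inner ℝ x l = ∑ j, l j * x j := by
    intro x l
    rw [PiLp.inner_apply]
    rfl
  refine ⟨G.map (fun x : E => (WithLp.ofLp x : Fin d → ℝ)),
    Measure.isProbabilityMeasure_map hofm.aemeasurable, ?_, ?_⟩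
  · intro l
    rw [integral_map hofm.aemeasurable (by
      refine Continuous.aestronglyMeasurable ?_
      fun_prop)]
    have := hGcf (WithLp.toLp 2 l)
    rw [charFun_apply] at this
    simp only [hinner] at this
    have e1 : ∀ x : E, Complex.exp (Complex.I * ((∑ j, l j * x j : ℝ) : ℂ)) =
      Complex.exp (((∑ j, l j * x j : ℝ) : ℂ) * Complex.I) := fun x => by rw [mul_comm]
    simp only [e1]
    refine this.trans ?_
    congr 1
    push_cast
    ring
  · intro f
    have hYm : ∀ n : ℕ, Measurable (fun ω => (WithLp.toLp 2
        (fun j => ((X n ω j : ℝ) - n * mvec A ρinf j) / Real.sqrt n) : E)) := by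
      intro n
      refine (PiLp.continuous_toLp 2 _).measurable.comp ?_
      have hX : Measurable (X n) := (hQT.adapted_X n).mono (ℱ.le n) le_rfl
      refine measurable_pi_lambda _ fun j => ?_
      refine Measurable.div_const (Measurable.sub_const ?_ _) _
      exact (measurable_of_countable (fun z : ℤ => (z : ℝ))).comp ((measurable_pi_apply j).comp hX)
    have hlim : Tendsto (β := ProbabilityMeasure E) (fun n : ℕ => (⟨μ.map (fun ω => (WithLp.toLp 2
        (fun j => ((X n ω j : ℝ) - n * mvec A ρinf j) / Real.sqrt n) : E)),
        Measure.isProbabilityMeasure_map (hYm n).aemeasurable⟩ : ProbabilityMeasure E)) atTop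
        (nhds (X := ProbabilityMeasure E) ⟨G, inferInstance⟩) := by
      refine ProbabilityMeasure.tendsto_of_tendsto_charFun fun t => ?_
      change Tendsto (fun n : ℕ => charFun (μ.map (fun ω => (WithLp.toLp 2
        (fun j => ((X n ω j : ℝ) - n * mvec A ρinf j) / Real.sqrt n) : E))) t) atTop
        (nhds (charFun G t))
      rw [hGcf]
      refine (hcf (WithLp.ofLp t)).congr fun n => ?_
      rw [charFun_apply, integral_map (hYm n).aemeasurable (by
        refine Continuous.aestronglyMeasurable ?_
        fun_prop)]
      refine integral_congr_ae (Eventually.of_forall fun ω => ?_)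
      simp only [hinner]
      congr 1
      unfold th
      rw [mul_assoc, mul_comm Complex.I, ← Complex.ofReal_mul, Finset.mul_sum]
      congr 2
      refine Finset.sum_congr rfl fun j _ => ?_
      rw [div_eq_mul_inv]; ring
    have := ProbabilityMeasure.tendsto_iff_forall_integral_tendsto.1 hlim (f.compContinuous ⟨_, hofc⟩)
    rw [integral_map hofm.aemeasurable f.continuous.aestronglyMeasurable]
    refine Tendsto.congr (fun n => ?_) this
    change ∫ x, f (WithLp.ofLp x) ∂(μ.map (fun ω => (WithLp.toLp 2
        (fun j => ((X n ω j : ℝ) - n * mvec A ρinf j) / Real.sqrt n) : E))) = _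
    exact integral_map (hYm n).aemeasurable (f.continuous.comp hofc).aestronglyMeasurable
end
end
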